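/- arXiv:2407.18863 — 3 statements merged into one kernel-verified Lean document; each statement's English description precedes it below -/
import Mathlib

section
/- Let $S$ be a finite set, let $\overline S=S\sqcup S^{-1}$ be $S$ together with formal inverses, and let $R$ be a set of cyclically reduced words over $\overline S$. Let $\overline R$ be the closure of $R\cup R^{-1}$ under cyclic shifts; a piece is a common prefix of two distinct elements of $\overline R$. Assume that $R$ satisfies the $C'(1/6)$ condition: $|p|<|r|/6$ whenever $r\in\overline R$ and $p$ is a piece which is a subword of $r$. Put $G=\langle S\mid R\rangle$ and let $\mathrm{Cay}(G,S)$ be its Cayley graph, with vertex set $G$ and, for all $g\in G$ and $s\in S$, one edge labelled $s$ from $g$ to $gs$ (so loops and multiple edges are allowed), regarded as a metric graph with its path metric $d$ in which every edge has length $1$. For $Q\ge 1$, a $Q$-quasi-geodesic is a continuous map $\gamma:I\to\mathrm{Cay}(G,S)$ on an interval $I\subseteq\mathbb R$ with $|t-s|/Q-Q\le d(\gamma(s),\gamma(t))\le Q|t-s|+Q$ for all $s,t\in I$; a quasi-geodesic is a $Q$-quasi-geodesic for some $Q\ge 1$. A Morse gauge is a non-decreasing continuous function $M:[1,\infty)\to[0,\infty)$.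 A quasi-geodesic $\gamma$ is $M$-Morse if for all $Q\ge1$ and all $s\le t$ in its domain, every $Q$-quasi-geodesic with endpoints $\gamma(s)$ and $\gamma(t)$ is contained in the closed $M(Q)$-neighbourhood of $\gamma([s,t])$. Let $M$ be a Morse gauge. Then for each integer $N\ge 2$ there exists a constant $D$ (one may take $D=\frac{2N}{N-1}M(N)$) such that the following holds: if $r\in R$ and $w$ is a subword of $r$ such that $|w|\ge |r|/N$ and some edge path in $\mathrm{Cay}(G,S)$ labelled by $w$ (parametrised with unit speed by $[0,|w|]$) is an $M$-Morse quasi-geodesic, then $|r|\le D$. -/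
namespace MorseSC

/-! ### Morse gauges, quasi-geodesics and Morse quasi-geodesics -/

/-- A Morse gauge: a non-decreasing continuous function `[1, ∞) → [0, ∞)`
(the values of `M` outside `[1, ∞)` are irrelevant). -/
def IsMorseGauge (M : ℝ → ℝ) : Prop :=
  MonotoneOn M (Set.Ici 1) ∧ ContinuousOn M (Set.Ici 1) ∧ ∀ t : ℝ, 1 ≤ t → 0 ≤ M t

/-- `γ`, restricted to `I`, is a (continuous) `Q`-quasi-geodesic. -/
def IsQuasiGeodesicOn {X : Type*} [MetricSpace X] (Q : ℝ) (I : Set ℝ) (γ : ℝ → X) : Prop :=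
  ContinuousOn γ I ∧ ∀ s ∈ I, ∀ t ∈ I,
    |t - s| / Q - Q ≤ dist (γ s) (γ t) ∧ dist (γ s) (γ t) ≤ Q * |t - s| + Q

/-- `γ`, restricted to `I`, is an `M`-Morse quasi-geodesic: it is a quasi-geodesic, and every
`Q`-quasi-geodesic `lam : [a, b] → X` from `γ s` to `γ t` stays in the closed
`M Q`-neighbourhood of `γ [s, t]`. -/
def IsMorseQuasiGeodesicOn {X : Type*} [MetricSpace X] (M : ℝ → ℝ) (I : Set ℝ)
    (γ : ℝ → X) : Prop :=
  (∃ Q : ℝ, 1 ≤ Q ∧ IsQuasiGeodesicOn Q I γ) ∧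
  ∀ Q : ℝ, 1 ≤ Q → ∀ s ∈ I, ∀ t ∈ I, s ≤ t →
    ∀ (lam : ℝ → X) (a b : ℝ), a ≤ b → IsQuasiGeodesicOn Q (Set.Icc a b) lam →
      lam a = γ s → lam b = γ t →
      lam '' Set.Icc a b ⊆ Metric.cthickening (M Q) (γ '' Set.Icc s t)

/-! ### Words and small cancellation -/

/-- A word over `S ∪ S⁻¹`; the letter `(s, true)` is `s` and `(s, false)` is `s⁻¹`. -/
abbrev Word (S : Type*) := List (S × Bool)

/-- The closure of `R ∪ R⁻¹` under cyclic shifts. -/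
def symmClosure {S : Type*} (R : Set (Word S)) : Set (Word S) :=
  {w | ∃ r ∈ R, r ~r w ∨ FreeGroup.invRev r ~r w}

/-- A piece: a common prefix of two distinct elements of the symmetrised set of relators. -/
def IsPiece {S : Type*} (R : Set (Word S)) (p : Word S) : Prop :=
  ∃ r₁ ∈ symmClosure R, ∃ r₂ ∈ symmClosure R, r₁ ≠ r₂ ∧ p <+: r₁ ∧ p <+: r₂

/-- `R` consists of cyclically reduced words and satisfies the `C'(lam)` condition. -/
def SmallCancellation {S : Type*} (lam : ℝ) (R : Set (Word S)) : Prop :=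
  (∀ r ∈ R, FreeGroup.IsCyclicallyReduced r) ∧
  ∀ r ∈ symmClosure R, ∀ p : Word S, IsPiece R p → p <:+: r →
    (p.length : ℝ) < lam * (r.length : ℝ)

/-! ### The group `⟨S | R⟩` and its word metric -/

/-- The group `⟨S | R⟩`. -/
abbrev PGroup {S : Type*} (R : Set (Word S)) := PresentedGroup (FreeGroup.mk '' R)

/-- The element of `⟨S | R⟩` represented by a word. -/
def evalWord {S : Type*} (R : Set (Word S)) (w : Word S) : PGroup R :=
  PresentedGroup.mk (FreeGroup.mk '' R) (FreeGroup.mk w)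

/-- The word metric on `⟨S | R⟩`. -/
noncomputable def wordDist {S : Type*} (R : Set (Word S)) (g h : PGroup R) : ℕ :=
  sInf {n : ℕ | ∃ w : Word S, w.length = n ∧ g * evalWord R w = h}

section wordDist

variable {S : Type*} {R : Set (Word S)}

theorem evalWord_append (v w : Word S) :
    evalWord R (v ++ w) = evalWord R v * evalWord R w := by
  unfold evalWord
  rw [← map_mul, FreeGroup.mul_mk]

theorem evalWord_invRev (w : Word S) :
    evalWord R (FreeGroup.invRev w) = (evalWord R w)⁻¹ := by
  unfold evalWord
  rw [← map_inv, FreeGroup.inv_mk]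

theorem evalWord_surjective : Function.Surjective (evalWord R) := by
  intro g
  obtain ⟨x, rfl⟩ := PresentedGroup.mk_surjective _ g
  obtain ⟨w, rfl⟩ := Quot.exists_rep x
  exact ⟨w, rfl⟩

theorem exists_word (g h : PGroup R) :
    ∃ w : Word S, w.length = wordDist R g h ∧ g * evalWord R w = h := by
  have hne : {n : ℕ | ∃ w : Word S, w.length = n ∧ g * evalWord R w = h}.Nonempty := by
    obtain ⟨w, hw⟩ := evalWord_surjective (R := R) (g⁻¹ * h)
    exact ⟨_, w, rfl, by rw [hw]; group⟩
  exact Nat.sInf_mem hne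

theorem wordDist_le {g h : PGroup R} (w : Word S) (hw : g * evalWord R w = h) :
    wordDist R g h ≤ w.length :=
  Nat.sInf_le ⟨w, rfl, hw⟩

theorem wordDist_self (g : PGroup R) : wordDist R g g = 0 :=
  Nat.le_zero.1 (wordDist_le [] (mul_one g))

theorem wordDist_comm (g h : PGroup R) : wordDist R g h = wordDist R h g := by
  have key : ∀ a b : PGroup R, wordDist R a b ≤ wordDist R b a := by
    intro a b
    obtain ⟨w, hl, hw⟩ := exists_word b a
    rw [← hl, ← FreeGroup.invRev_length (L₁ := w)]
    apply wordDist_le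
    rw [evalWord_invRev, ← hw]; group
  exact le_antisymm (key g h) (key h g)

theorem wordDist_triangle (g h k : PGroup R) :
    wordDist R g k ≤ wordDist R g h + wordDist R h k := by
  obtain ⟨v, hv, hv'⟩ := exists_word g h
  obtain ⟨w, hw, hw'⟩ := exists_word h k
  rw [← hv, ← hw, ← List.length_append]
  apply wordDist_le
  rw [evalWord_append, ← mul_assoc, hv', hw']

end wordDist

/-! ### The Cayley graph as a metric space

`Cay(G, S)` has vertex set `G` and, for all `g ∈ G` and `s ∈ S`, one edge labelled `s` from `g`
to `g s` (so loops and multiple edges occur), each a copy of `[0, 1]`. -/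

/-- Names for the points of the Cayley graph: a vertex, or the point with coordinate `t ∈ [0, 1]`
on the edge labelled `s` from `g` to `g s`. -/
inductive PrePoint {S : Type*} (R : Set (Word S)) : Type _ where
  | vertex (g : PGroup R) : PrePoint R
  | edge (g : PGroup R) (s : S) (t : unitInterval) : PrePoint R

namespace PrePoint

variable {S : Type*} {R : Set (Word S)}

/-- The two ends of the closed edge carrying a point (a vertex is its own end, twice). -/
def vert : PrePoint R → Bool → PGroup R
  | vertex g, _ => g
  | edge g _ _, false => g
  | edge g s _, true => g * PresentedGroup.of s

/-- The distances, along the closed edge carrying a point, to its two ends. -/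
def off : PrePoint R → Bool → ℝ
  | vertex _, _ => 0
  | edge _ _ t, false => t
  | edge _ _ t, true => 1 - t

/-- The length of a shortest path between two points which leaves `x` through its end `i` and
reaches `y` through its end `j`. -/
noncomputable def via (x y : PrePoint R) (i j : Bool) : ℝ :=
  x.off i + (wordDist R (x.vert i) (y.vert j) : ℝ) + y.off j

/-- The length of a shortest path between two points which passes through a vertex. -/
noncomputable def viaDist (x y : PrePoint R) : ℝ :=
  min (min (via x y false false) (via x y false true))
    (min (via x y true false) (via x y true true))

open Classical in
/-- The path metric on the Cayley graph, all edges having length one: points on a common edge may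
also be joined inside this edge. -/
noncomputable def pdist : PrePoint R → PrePoint R → ℝ
  | edge g s t, edge h s' t' =>
      if g = h ∧ s = s' then min |(t : ℝ) - t'| (viaDist (edge g s t) (edge h s' t'))
      else viaDist (edge g s t) (edge h s' t')
  | x, y => viaDist x y

/-- `x` and `y` lie on the same edge, with coordinates at distance `c`. -/
def Same (x y : PrePoint R) (c : ℝ) : Prop :=
  ∃ g s, ∃ t t' : unitInterval, x = edge g s t ∧ y = edge g s t' ∧ c = |(t : ℝ) - t'|

theorem off_nonneg (x : PrePoint R) (i : Bool) : 0 ≤ x.off i := by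
  rcases x with g | ⟨g, s, t⟩
  · exact le_rfl
  · cases i
    · exact t.2.1
    · exact sub_nonneg.2 t.2.2

theorem via_nonneg (x y : PrePoint R) (i j : Bool) : 0 ≤ via x y i j := by
  have h1 := off_nonneg x i
  have h2 := off_nonneg y j
  unfold via
  positivity

theorem via_comm (x y : PrePoint R) (i j : Bool) : via x y i j = via y x j i := by
  unfold via
  rw [wordDist_comm]
  ring

theorem viaDist_le (x y : PrePoint R) (i j : Bool) : viaDist x y ≤ via x y i j := by
  cases i <;> cases j <;> simp [viaDist]

theorem exists_via (x y : PrePoint R) : ∃ i j, viaDist x y = via x y i j := by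
  unfold viaDist
  rcases min_choice (min (via x y false false) (via x y false true))
    (min (via x y true false) (via x y true true)) with h | h <;> rw [h]
  · rcases min_choice (via x y false false) (via x y false true) with h | h <;>
      exact ⟨_, _, h⟩
  · rcases min_choice (via x y true false) (via x y true true) with h | h <;>
      exact ⟨_, _, h⟩

theorem pdist_le_via (x y : PrePoint R) (i j : Bool) : pdist x y ≤ via x y i j := by
  refine le_trans ?_ (viaDist_le x y i j)
  rcases x with g | ⟨g, s, t⟩ <;> rcases y with h | ⟨h, s', t'⟩ <;> simp only [pdist, le_refl]
  split_ifs
  · exact min_le_right _ _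
  · exact le_rfl

theorem pdist_le_same {x y : PrePoint R} {c : ℝ} (h : Same x y c) : pdist x y ≤ c := by
  obtain ⟨g, s, t, t', rfl, rfl, rfl⟩ := h
  simp [pdist]

theorem pdist_cases (x y : PrePoint R) :
    (∃ i j, pdist x y = via x y i j) ∨ Same x y (pdist x y) := by
  obtain ⟨i, j, h⟩ := exists_via x y
  rcases x with g | ⟨g, s, t⟩ <;> rcases y with h' | ⟨h', s', t'⟩ <;>
    try exact Or.inl ⟨i, j, h⟩
  by_cases hc : g = h' ∧ s = s'
  · obtain ⟨rfl, rfl⟩ := hc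
    simp only [pdist, and_self, if_true]
    rcases min_choice |(t : ℝ) - t'| (viaDist (edge g s t) (edge g s t')) with h2 | h2
    · exact Or.inr ⟨g, s, t, t', rfl, rfl, h2⟩
    · exact Or.inl ⟨i, j, h2.trans h⟩
  · simp only [pdist, if_neg hc]
    exact Or.inl ⟨i, j, h⟩

theorem Same.symm {x y : PrePoint R} {c : ℝ} (h : Same x y c) : Same y x c := by
  obtain ⟨g, s, t, t', rfl, rfl, rfl⟩ := h
  exact ⟨g, s, t', t, rfl, rfl, abs_sub_comm _ _⟩

theorem Same.vert_eq {x y : PrePoint R} {c : ℝ} (h : Same x y c) (i : Bool) :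
    x.vert i = y.vert i := by
  obtain ⟨g, s, t, t', rfl, rfl, rfl⟩ := h
  cases i <;> rfl

theorem Same.off_le {x y : PrePoint R} {c : ℝ} (h : Same x y c) (i : Bool) :
    x.off i ≤ c + y.off i := by
  obtain ⟨g, s, t, t', rfl, rfl, rfl⟩ := h
  have h1 := le_abs_self ((t : ℝ) - t')
  have h2 := neg_abs_le ((t : ℝ) - t')
  cases i <;> simp only [off] <;> linarith

theorem pdist_self (x : PrePoint R) : pdist x x = 0 := by
  apply le_antisymm
  · rcases x with g | ⟨g, s, t⟩
    · refine (pdist_le_via _ _ false false).trans ?_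
      simp [via, off, vert, wordDist_self]
    · exact pdist_le_same ⟨g, s, t, t, rfl, rfl, by simp⟩
  · rcases pdist_cases x x with ⟨i, j, h⟩ | ⟨g, s, t, t', -, -, h⟩ <;> rw [h]
    · exact via_nonneg _ _ _ _
    · exact abs_nonneg _

theorem pdist_comm (x y : PrePoint R) : pdist x y = pdist y x := by
  have key : ∀ a b : PrePoint R, pdist a b ≤ pdist b a := by
    intro a b
    rcases pdist_cases b a with ⟨i, j, h⟩ | h
    · rw [h, via_comm]
      exact pdist_le_via _ _ _ _
    · exact pdist_le_same h.symm
  exact le_antisymm (key x y) (key y x)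

theorem wordDist_vert_le (y : PrePoint R) (i j : Bool) :
    (wordDist R (y.vert i) (y.vert j) : ℝ) ≤ y.off i + y.off j := by
  have h1 : ∀ (g : PGroup R) (s : S), wordDist R g (g * PresentedGroup.of s) ≤ 1 :=
    fun g s => wordDist_le [(s, true)] rfl
  rcases y with g | ⟨g, s, t⟩
  · simp [vert, off, wordDist_self]
  · have h2 : (wordDist R g (g * PresentedGroup.of s) : ℝ) ≤ 1 := by exact_mod_cast h1 g s
    have h3 := t.2.1
    have h4 := t.2.2
    cases i <;> cases j <;> simp only [vert, off, wordDist_self, Nat.cast_zero]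
    · linarith
    · linarith
    · rw [wordDist_comm]; linarith
    · linarith

theorem pdist_triangle (x y z : PrePoint R) : pdist x z ≤ pdist x y + pdist y z := by
  rcases pdist_cases x y with ⟨i, j, h⟩ | h <;> rcases pdist_cases y z with ⟨k, l, h'⟩ | h'
  · refine (pdist_le_via x z i l).trans ?_
    rw [h, h']
    have e1 := wordDist_vert_le y j k
    have e2 : (wordDist R (x.vert i) (z.vert l) : ℝ) ≤ wordDist R (x.vert i) (y.vert j) +
        (wordDist R (y.vert j) (y.vert k) + wordDist R (y.vert k) (z.vert l)) := by
      exact_mod_cast (wordDist_triangle _ (y.vert j) _).trans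
        (Nat.add_le_add_left (wordDist_triangle _ (y.vert k) _) _)
    unfold via
    linarith
  · refine (pdist_le_via x z i j).trans ?_
    have e := h'.symm.off_le j
    rw [h]
    unfold via
    rw [← h'.vert_eq j]
    linarith
  · refine (pdist_le_via x z k l).trans ?_
    have e := h.off_le k
    rw [h']
    unfold via
    rw [h.vert_eq k]
    linarith
  · obtain ⟨g, s, t, t', rfl, rfl, e⟩ := h
    obtain ⟨g', s', u, u', e1, rfl, e'⟩ := h'
    cases e1
    rw [e, e']
    exact (pdist_le_same ⟨g, s, t, u', rfl, rfl, rfl⟩).trans (abs_sub_le _ _ _)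

noncomputable instance : PseudoMetricSpace (PrePoint R) where
  dist := pdist
  dist_self := pdist_self
  dist_comm := pdist_comm
  dist_triangle := pdist_triangle

end PrePoint

/-- The Cayley graph `Cay(G, S)` of `G = ⟨S | R⟩` with its path metric: names of points at
distance zero (those of the ends of edges and of the corresponding vertices) are identified. -/
abbrev Cay {S : Type*} (R : Set (Word S)) := SeparationQuotient (PrePoint R)

/-- The point at coordinate `t` (clamped to `[0, 1]`) on the oriented edge which starts at the
vertex `g` and is labelled by the letter `a`; the edge labelled `s⁻¹` starting at `g` is the edge
labelled `s` from `g s⁻¹` to `g`, traversed backwards. -/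
noncomputable def edgePoint {S : Type*} (R : Set (Word S)) (g : PGroup R) (a : S × Bool)
    (t : ℝ) : Cay R :=
  SeparationQuotient.mk <|
    if a.2 then PrePoint.edge g a.1 (Set.projIcc 0 1 zero_le_one t)
    else PrePoint.edge (g * (PresentedGroup.of a.1)⁻¹) a.1
      (unitInterval.symm (Set.projIcc 0 1 zero_le_one t))

/-- The edge path in `Cay(G, S)` which starts at the vertex `g` and is labelled by the word `w`,
parametrised with unit speed by `[0, |w|]`. -/
noncomputable def edgePath {S : Type*} (R : Set (Word S)) : PGroup R → Word S → ℝ → Cay R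
  | g, [], _ => SeparationQuotient.mk (PrePoint.vertex g)
  | g, a :: w, t =>
      if t ≤ 1 then edgePoint R g a t else edgePath R (g * evalWord R [a]) w (t - 1)

end MorseSC

namespace MorseSC

universe u

/-! ### Words closed under rotation and inversion, with short pieces -/

/-- The inverse of a letter. -/
def letterInv {S : Type u} (a : S × Bool) : S × Bool := (a.1, !a.2)

section Words

variable {S : Type u}

@[simp] theorem letterInv_letterInv (a : S × Bool) : letterInv (letterInv a) = a := by
  simp [letterInv]

theorem letterInv_injective : Function.Injective (letterInv (S := S)) :=
  Function.LeftInverse.injective letterInv_letterInv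

theorem invRev_eq (w : Word S) : FreeGroup.invRev w = (w.map letterInv).reverse := rfl

theorem invRev_append (v w : Word S) :
    FreeGroup.invRev (v ++ w) = FreeGroup.invRev w ++ FreeGroup.invRev v := by
  simp [invRev_eq]

theorem invRev_getElem? (w : Word S) {i : ℕ} (hi : i < w.length) :
    (FreeGroup.invRev w)[w.length - 1 - i]? = w[i]?.map letterInv := by
  rw [invRev_eq, List.getElem?_reverse (by simp; omega)]
  simp only [List.length_map, List.getElem?_map]
  congr 2
  omega

/-- A symmetrised set of nonempty reduced words satisfying the metric condition `C'(1/6)`. -/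
structure IsSymmSmall (C : Set (Word S)) : Prop where
  ne_nil : ∀ r ∈ C, r ≠ []
  rotate : ∀ u v, u ++ v ∈ C → v ++ u ∈ C
  inv : ∀ r ∈ C, FreeGroup.invRev r ∈ C
  reduced : ∀ r ∈ C, FreeGroup.IsReduced r
  piece : ∀ r ∈ C, ∀ r' ∈ C, r ≠ r' → ∀ p, p <+: r → p <+: r' → 6 * p.length < r.length

theorem IsReduced.getElem?_succ_ne {w : Word S} (hw : FreeGroup.IsReduced w) {i : ℕ}
    {a b : S × Bool} (ha : w[i]? = some a) (hb : w[i + 1]? = some b) : b ≠ letterInv a := by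
  obtain ⟨h1, rfl⟩ := List.getElem?_eq_some_iff.1 ha
  obtain ⟨h2, rfl⟩ := List.getElem?_eq_some_iff.1 hb
  have := List.isChain_iff_getElem.1 hw i h2
  intro h
  rw [h] at this
  simp [letterInv] at this

theorem IsReduced.ne_of_append {u v : Word S} {a b : S × Bool}
    (hw : FreeGroup.IsReduced (u ++ a :: b :: v)) : b ≠ letterInv a :=
  IsReduced.getElem?_succ_ne hw (i := u.length) (by simp) (by simp)

end Words

/-! ### Paths in labelled graphs -/

/-- `Path E x w y`: in the labelled graph `E` there is a path from `x` to `y` labelled `w`. -/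
def Path {S : Type u} {V : Type u} (E : V → S × Bool → V → Prop) : V → Word S → V → Prop
  | x, [], y => x = y
  | x, a :: w, y => ∃ z, E x a z ∧ Path E z w y

section Path

variable {S V : Type u} {E : V → S × Bool → V → Prop}

theorem path_append {x y : V} {v w : Word S} :
    Path E x (v ++ w) y ↔ ∃ z, Path E x v z ∧ Path E z w y := by
  induction v generalizing x with
  | nil => simp [Path]
  | cons a v ih =>
    simp only [List.cons_append, Path, ih]
    exact ⟨fun ⟨z, h, z', h', h''⟩ => ⟨z', ⟨z, h, h'⟩, h''⟩,
      fun ⟨z', ⟨z, h, h'⟩, h''⟩ => ⟨z, h, z', h', h''⟩⟩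

theorem path_singleton {x y : V} {a : S × Bool} : Path E x [a] y ↔ E x a y := by
  simp [Path]

theorem Path.symm (hs : ∀ x a y, E x a y → E y (letterInv a) x) {x y : V} {w : Word S}
    (h : Path E x w y) : Path E y (FreeGroup.invRev w) x := by
  induction w generalizing x with
  | nil => exact Eq.symm h
  | cons a w ih =>
    obtain ⟨z, h1, h2⟩ := h
    have : FreeGroup.invRev (a :: w) = FreeGroup.invRev w ++ [letterInv a] := by simp [invRev_eq]
    rw [this, path_append]
    exact ⟨z, ih h2, path_singleton.2 (hs _ _ _ h1)⟩

theorem Path.det (hd : ∀ x a y z, E x a y → E x a z → y = z) {x y z : V} {w : Word S}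
    (h : Path E x w y) (h' : Path E x w z) : y = z := by
  induction w generalizing x with
  | nil => exact Eq.trans (Eq.symm h) h'
  | cons a w ih =>
    obtain ⟨u, h1, h2⟩ := h
    obtain ⟨u', h1', h2'⟩ := h'
    obtain rfl := hd _ _ _ _ h1 h1'
    exact ih h2 h2'

theorem Path.rev_det (hs : ∀ x a y, E x a y → E y (letterInv a) x)
    (hd : ∀ x a y z, E x a y → E x a z → y = z) {x y z : V} {w : Word S}
    (h : Path E x w z) (h' : Path E y w z) : x = y :=
  Path.det hd (h.symm hs) (h'.symm hs)

theorem Path.closed_of_rotate (hs : ∀ x a y, E x a y → E y (letterInv a) x)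
    (hd : ∀ x a y z, E x a y → E x a z → y = z) {x z : V} {u v : Word S}
    (h : Path E x u z) (h' : Path E z (v ++ u) z) : Path E x (u ++ v) x := by
  obtain ⟨x', h1, h2⟩ := path_append.1 h'
  obtain rfl := Path.rev_det hs hd h h2
  exact path_append.2 ⟨z, h, h1⟩

theorem Path.rotate_closed (hd : ∀ x a y z, E x a y → E x a z → y = z) {x z : V} {u v : Word S}
    (h : Path E x u z) (h' : Path E x (u ++ v) x) : Path E z (v ++ u) z := by
  obtain ⟨z', h1, h2⟩ := path_append.1 h'
  obtain rfl := Path.det hd h h1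
  exact path_append.2 ⟨x, h2, h⟩

/-- Either a word can be read from `x`, or there is a first letter which cannot. -/
theorem exists_path_or_stuck (E : V → S × Bool → V → Prop) (x : V) (w : Word S) :
    (∃ y, Path E x w y) ∨
      ∃ p a s z, w = p ++ a :: s ∧ Path E x p z ∧ ∀ z', ¬ E z a z' := by
  induction w generalizing x with
  | nil => exact Or.inl ⟨x, rfl⟩
  | cons a w ih =>
    by_cases h : ∃ z, E x a z
    · obtain ⟨z, hz⟩ := h
      rcases ih z with ⟨y, hy⟩ | ⟨p, b, s, z', rfl, hp, hb⟩
      · exact Or.inl ⟨y, z, hz, hy⟩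
      · exact Or.inr ⟨a :: p, b, s, z', rfl, ⟨z, hz, hp⟩, hb⟩
    · exact Or.inr ⟨[], a, w, x, rfl, rfl, fun z hz => h ⟨z, hz⟩⟩

theorem Path.map {W : Type u} {E' : W → S × Bool → W → Prop} (f : V → W)
    (hf : ∀ x a y, E x a y → E' (f x) a (f y)) {x y : V} {w : Word S} (h : Path E x w y) :
    Path E' (f x) w (f y) := by
  induction w generalizing x with
  | nil => exact congrArg f h
  | cons a w ih =>
    obtain ⟨u, h1, h2⟩ := h
    exact ⟨_, hf _ _ _ h1, ih h2⟩

theorem Path.le_add_length {h : V → ℤ} (hl : ∀ x a y, E x a y → h y ≤ h x + 1) {x y : V}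
    {w : Word S} (hp : Path E x w y) : h y ≤ h x + w.length := by
  induction w generalizing x with
  | nil => cases hp; simp
  | cons a w ih =>
    obtain ⟨u, h1, h2⟩ := hp
    have := hl _ _ _ h1
    have := ih h2
    push_cast [List.length_cons]
    linarith

end Path

/-! ### Stages of the construction -/

/-- A deterministic labelled graph with a `1`-Lipschitz function in which every relator that can
be read for at least a third of its length is the label of a closed path. -/
structure Stage {S : Type u} (C : Set (Word S)) where
  V : Type u
  E : V → S × Bool → V → Prop
  symm : ∀ x a y, E x a y → E y (letterInv a) x
  det : ∀ x a y z, E x a y → E x a z → y = z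
  height : V → ℤ
  lip : ∀ x a y, E x a y → height y ≤ height x + 1
  closed : ∀ r ∈ C, ∀ p, p <+: r → r.length ≤ 3 * p.length → ∀ x y, Path E x p y → Path E x r x

namespace Stage

variable {S : Type u} {C : Set (Word S)} (Γ : Stage C)

theorem path_rev_det {x y z : Γ.V} {w : Word S} (h : Path Γ.E x w z) (h' : Path Γ.E y w z) :
    x = y :=
  Path.rev_det Γ.symm Γ.det h h'

/-- A relator `t ++ σ` which leaves the graph at `x`, reads `t` outside, comes back at `y` and
returns to `x` inside the graph along `σ`. -/
@[ext] structure Exit where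
  x : Γ.V
  y : Γ.V
  t : Word S
  σ : Word S
  mem : t ++ σ ∈ C
  ne_nil : t ≠ []
  path : Path Γ.E y σ x
  out : ∀ a, t[0]? = some a → ∀ z, ¬ Γ.E x a z
  into : ∀ a, t[t.length - 1]? = some a → ∀ z, ¬ Γ.E z a y

namespace Exit

variable {Γ} (hC : IsSymmSmall C)

/-- The relator carried by an exit. -/
def rel (e : Γ.Exit) : Word S := e.t ++ e.σ

theorem length_pos (e : Γ.Exit) : 0 < e.t.length := List.length_pos_iff.2 e.ne_nil

theorem length_rel (e : Γ.Exit) : e.rel.length = e.t.length + e.σ.length := by simp [rel]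

/-- The same relator, read backwards. -/
def flip (hC : IsSymmSmall C) (e : Γ.Exit) : Γ.Exit where
  x := e.y
  y := e.x
  t := FreeGroup.invRev e.t
  σ := FreeGroup.invRev e.σ
  mem := hC.rotate _ _ (by rw [← invRev_append]; exact hC.inv _ e.mem)
  ne_nil := by
    have := e.length_pos
    rw [← List.length_pos_iff]
    simpa using this
  path := e.path.symm Γ.symm
  out := by
    intro a ha z hz
    have hl := e.length_pos
    have := invRev_getElem? e.t (i := e.t.length - 1) (by omega)
    rw [show e.t.length - 1 - (e.t.length - 1) = 0 by omega, ha] at this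
    obtain ⟨b, hb, hab⟩ := Option.map_eq_some_iff.1 this.symm
    refine e.into b hb z ?_
    have := Γ.symm _ _ _ hz
    rwa [← hab, letterInv_letterInv] at this
  into := by
    intro a ha z hz
    have hl := e.length_pos
    have := invRev_getElem? e.t (i := 0) (by omega)
    rw [FreeGroup.invRev_length] at ha
    rw [Nat.sub_zero, ha] at this
    obtain ⟨b, hb, hab⟩ := Option.map_eq_some_iff.1 this.symm
    refine e.out b hb z ?_
    have := Γ.symm _ _ _ hz
    rwa [← hab, letterInv_letterInv] at this

@[simp] theorem flip_flip (e : Γ.Exit) : (e.flip hC).flip hC = e := by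
  ext1 <;> simp [flip]

@[simp] theorem flip_x (e : Γ.Exit) : (e.flip hC).x = e.y := rfl
@[simp] theorem flip_y (e : Γ.Exit) : (e.flip hC).y = e.x := rfl

@[simp] theorem flip_length (e : Γ.Exit) : (e.flip hC).t.length = e.t.length := by simp [flip]

@[simp] theorem flip_length_rel (e : Γ.Exit) : (e.flip hC).rel.length = e.rel.length := by
  simp [flip, rel]

theorem flip_getElem? (e : Γ.Exit) {i : ℕ} (hi : i < e.t.length) :
    (e.flip hC).t[e.t.length - 1 - i]? = e.t[i]?.map letterInv :=
  invRev_getElem? e.t hi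

include hC in
theorem length_σ_lt (e : Γ.Exit) : 3 * e.σ.length < e.rel.length := by
  by_contra! h
  have h1 : e.σ ++ e.t ∈ C := hC.rotate _ _ e.mem
  have h2 := Γ.closed _ h1 e.σ (List.prefix_append _ _) (by simpa [rel, add_comm] using h) _ _
    e.path
  obtain ⟨z, hz, hz'⟩ := path_append.1 h2
  obtain rfl := Path.det Γ.det hz e.path
  have ho := e.out
  rcases ht : e.t with _ | ⟨a, t⟩
  · exact e.ne_nil ht
  · rw [ht] at hz' ho
    obtain ⟨w, hw, -⟩ := hz'
    exact ho a rfl w hw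

include hC in
theorem lt_length (e : Γ.Exit) : 2 * e.rel.length < 3 * e.t.length := by
  have := e.length_σ_lt hC
  have := e.length_rel
  omega

theorem σ_length_le_of_rel_eq {e e' : Γ.Exit} (hx : e.x = e'.x) (hr : e.rel = e'.rel) :
    e'.σ.length ≤ e.σ.length := by
  by_contra! h
  have hs : e.σ <:+ e'.σ := List.suffix_of_suffix_length_le
    (l₃ := e.rel) (List.suffix_append _ _) (hr ▸ List.suffix_append _ _) h.le
  obtain ⟨u, hu⟩ := hs
  have hne : u ≠ [] := by
    rintro rfl
    rw [← hu] at h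
    simp at h
  have ht : e.t = e'.t ++ u := by
    have : e.t ++ e.σ = e'.t ++ u ++ e.σ := by
      rw [List.append_assoc, hu]
      exact hr
    exact List.append_cancel_right this
  obtain ⟨u', a, rfl⟩ : ∃ u' a, u = u' ++ [a] := ⟨_, _, (List.dropLast_concat_getLast hne).symm⟩
  have hp := e'.path
  rw [← hu, ← hx] at hp
  obtain ⟨z, h1, h2⟩ := path_append.1 hp
  obtain rfl := Γ.path_rev_det h2 e.path
  obtain ⟨z', -, h4⟩ := path_append.1 h1
  refine e.into a ?_ z' (path_singleton.1 h4)
  rw [ht, ← List.append_assoc]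
  simp

theorem eq_of_rel_eq {e e' : Γ.Exit} (hx : e.x = e'.x) (hr : e.rel = e'.rel) : e = e' := by
  have hl := le_antisymm (σ_length_le_of_rel_eq hx.symm hr.symm) (σ_length_le_of_rel_eq hx hr)
  obtain ⟨ht, hs⟩ := List.append_inj' hr hl
  have hp := e'.path
  rw [← hs, ← hx] at hp
  exact Exit.ext hx (Γ.path_rev_det e.path hp) ht hs

/-- The exits `e` and `e'` agree on their first `i = j` edges. -/
def Share (e : Γ.Exit) (i : ℕ) (e' : Γ.Exit) (j : ℕ) : Prop :=
  e.x = e'.x ∧ i = j ∧ e.t.take i = e'.t.take j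

theorem Share.symm {e e' : Γ.Exit} {i j : ℕ} (h : Share e i e' j) : Share e' j e i :=
  ⟨h.1.symm, h.2.1.symm, h.2.2.symm⟩

theorem Share.trans {e e' e'' : Γ.Exit} {i j k : ℕ} (h : Share e i e' j)
    (h' : Share e' j e'' k) : Share e i e'' k :=
  ⟨h.1.trans h'.1, h.2.1.trans h'.2.1, h.2.2.trans h'.2.2⟩

theorem Share.refl (e : Γ.Exit) (i : ℕ) : Share e i e i := ⟨rfl, rfl, rfl⟩

theorem Share.mono {e e' : Γ.Exit} {i j k l : ℕ} (h : Share e i e' j) (hk : k ≤ i)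
    (hkl : k = l) : Share e k e' l := by
  obtain ⟨h1, rfl, h3⟩ := h
  subst hkl
  refine ⟨h1, rfl, ?_⟩
  have := congrArg (List.take k) h3
  simpa [List.take_take, hk] using this

theorem Share.getElem? {e e' : Γ.Exit} {i j k : ℕ} (h : Share e i e' j) (hk : k < i) :
    e.t[k]? = e'.t[k]? := by
  obtain ⟨h1, rfl, h3⟩ := h
  have := congrArg (fun l => l[k]?) h3
  simpa [List.getElem?_take, hk] using this

include hC in
theorem Share.eq_or_small {e e' : Γ.Exit} {i j : ℕ} (h : Share e i e' j)
    (hi : i ≤ e.t.length) (hj : j ≤ e'.t.length) :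
    e = e' ∨ (6 * i < e.rel.length ∧ 6 * j < e'.rel.length) := by
  obtain ⟨h1, rfl, h3⟩ := h
  by_cases hr : e.rel = e'.rel
  · exact Or.inl (eq_of_rel_eq h1 hr)
  · right
    have p1 : e.t.take i <+: e.rel := (List.take_prefix _ _).trans (List.prefix_append _ _)
    have p2 : e.t.take i <+: e'.rel := by
      rw [h3]
      exact (List.take_prefix _ _).trans (List.prefix_append _ _)
    have q1 := hC.piece _ e.mem _ e'.mem hr _ p1 p2
    have q2 := hC.piece _ e'.mem _ e.mem (Ne.symm hr) _ p2 p1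
    rw [List.length_take, min_eq_left hi] at q1 q2
    exact ⟨q1, q2⟩

end Exit

end Stage

namespace Stage

variable {S : Type u} {C : Set (Word S)} (Γ : Stage C) (hC : IsSymmSmall C)

/-! ### The next layer -/

/-- The points strictly inside the outer part of an exit. -/
def Pt : Type u := {p : Γ.Exit × ℕ // 0 < p.2 ∧ p.2 < p.1.t.length}

/-- Two exits pass through the same new vertex, at positions `i` and `j`: up to reading
each of them backwards, they agree up to there. -/
def Meet (e : Γ.Exit) (i : ℕ) (e' : Γ.Exit) (j : ℕ) : Prop :=
  Exit.Share e i e' j ∨ Exit.Share (e.flip hC) (e.t.length - i) e' j ∨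
    Exit.Share e i (e'.flip hC) (e'.t.length - j) ∨
    Exit.Share (e.flip hC) (e.t.length - i) (e'.flip hC) (e'.t.length - j)

variable {Γ}

theorem Meet.symm {e e' : Γ.Exit} {i j : ℕ} (h : Γ.Meet hC e i e' j) : Γ.Meet hC e' j e i := by
  rcases h with h | h | h | h
  · exact Or.inl h.symm
  · exact Or.inr (Or.inr (Or.inl h.symm))
  · exact Or.inr (Or.inl h.symm)
  · exact Or.inr (Or.inr (Or.inr h.symm))

theorem Meet.flip_left {e e' : Γ.Exit} {i j : ℕ} (hi : i ≤ e.t.length)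
    (h : Γ.Meet hC e i e' j) : Γ.Meet hC (e.flip hC) (e.t.length - i) e' j := by
  unfold Meet at h ⊢
  simp only [Exit.flip_flip, Exit.flip_length, Nat.sub_sub_self hi]
  tauto

theorem Meet.trans_share {e e' e'' : Γ.Exit} {i j k : ℕ} (hi : 0 < i ∧ i < e.t.length)
    (hj : 0 < j ∧ j < e'.t.length) (hk : 0 < k ∧ k < e''.t.length)
    (h : Exit.Share e i e' j) (h' : Γ.Meet hC e' j e'' k) : Γ.Meet hC e i e'' k := by
  have key : ∀ (f : Γ.Exit) (l : ℕ), l ≤ f.t.length →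
      Exit.Share (e'.flip hC) (e'.t.length - j) f l →
      Exit.Share e i f l ∨ Exit.Share (e.flip hC) (e.t.length - i) f l ∨
        (f = e'.flip hC ∧ l = e'.t.length - j) := by
    intro f l hl hs
    rcases hs.eq_or_small hC (by simp) hl with he | ⟨h1, -⟩
    · exact Or.inr (Or.inr ⟨he.symm, hs.2.1.symm⟩)
    rcases h.eq_or_small hC hi.2.le hj.2.le with rfl | ⟨-, h2⟩
    · obtain rfl := h.2.1
      exact Or.inr (Or.inl hs)
    · exfalso
      have := e'.lt_length hC
      rw [Exit.flip_length_rel] at h1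
      omega
  rcases h' with h' | h' | h' | h'
  · exact Or.inl (h.trans h')
  · rcases key _ _ hk.2.le h' with h1 | h1 | ⟨rfl, rfl⟩
    · exact Or.inl h1
    · exact Or.inr (Or.inl h1)
    · refine Or.inr (Or.inr (Or.inl ?_))
      simpa [Nat.sub_sub_self hj.2.le] using h
  · exact Or.inr (Or.inr (Or.inl (h.trans h')))
  · rcases key _ _ (by simp) h' with h1 | h1 | ⟨h1, h2⟩
    · exact Or.inr (Or.inr (Or.inl h1))
    · exact Or.inr (Or.inr (Or.inr h1))
    · have h3 : e'' = e' := by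
        have := congrArg (Exit.flip hC) h1
        simpa using this
      subst h3
      obtain rfl : k = j := by omega
      exact Or.inl h

theorem Meet.trans {e e' e'' : Γ.Exit} {i j k : ℕ} (hi : 0 < i ∧ i < e.t.length)
    (hj : 0 < j ∧ j < e'.t.length) (hk : 0 < k ∧ k < e''.t.length)
    (h : Γ.Meet hC e i e' j) (h' : Γ.Meet hC e' j e'' k) : Γ.Meet hC e i e'' k := by
  have fi : 0 < e.t.length - i ∧ e.t.length - i < (e.flip hC).t.length := by simp; omega
  have fj : 0 < e'.t.length - j ∧ e'.t.length - j < (e'.flip hC).t.length := by simp; omega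
  have back : Γ.Meet hC (e.flip hC) (e.t.length - i) e'' k → Γ.Meet hC e i e'' k := by
    intro h
    have := h.flip_left hC fi.2.le
    simpa [Nat.sub_sub_self hi.2.le] using this
  rcases h with h | h | h | h
  · exact Meet.trans_share hC hi hj hk h h'
  · exact back (Meet.trans_share hC fi hj hk h h')
  · exact Meet.trans_share hC hi fj hk h (h'.flip_left hC hj.2.le)
  · exact back (Meet.trans_share hC fi fj hk h (h'.flip_left hC hj.2.le))

variable (Γ)

/-- New points are identified when exits meet there. -/
def ptSetoid : Setoid Γ.Pt where
  r p q := Γ.Meet hC p.1.1 p.1.2 q.1.1 q.1.2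
  iseqv := ⟨fun _ => Or.inl (Exit.Share.refl _ _), fun h => h.symm hC,
    fun {p q s} h h' => h.trans hC p.2 q.2 s.2 h'⟩

/-- The vertices of the next stage. -/
abbrev NextV : Type u := Γ.V ⊕ Quotient (Γ.ptSetoid hC)

variable {Γ}

/-- The vertex of the next stage at position `i` on the outer part of an exit. -/
def pos (e : Γ.Exit) (i : ℕ) : Γ.NextV hC :=
  if h0 : 0 < i then
    if h : i < e.t.length then Sum.inr (Quotient.mk (Γ.ptSetoid hC) ⟨(e, i), h0, h⟩)
    else Sum.inl e.y
  else Sum.inl e.x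

theorem pos_zero (e : Γ.Exit) : pos hC e 0 = Sum.inl e.x := rfl

theorem pos_length (e : Γ.Exit) : pos hC e e.t.length = Sum.inl e.y := by
  simp [pos, e.length_pos]

theorem pos_of_lt {e : Γ.Exit} {i : ℕ} (hi : 0 < i ∧ i < e.t.length) :
    pos hC e i = Sum.inr (Quotient.mk (Γ.ptSetoid hC) ⟨(e, i), hi⟩) := by
  unfold pos
  rw [dif_pos hi.1, dif_pos hi.2]

theorem pos_eq_iff {e e' : Γ.Exit} {i j : ℕ} (hi : 0 < i ∧ i < e.t.length)
    (hj : 0 < j ∧ j < e'.t.length) : pos hC e i = pos hC e' j ↔ Γ.Meet hC e i e' j := by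
  rw [pos_of_lt hC hi, pos_of_lt hC hj]
  constructor
  · intro h
    exact Quotient.exact (Sum.inr_injective h)
  · intro h
    exact congrArg Sum.inr (Quotient.sound (s := Γ.ptSetoid hC) h)

theorem pos_ne_inl {e : Γ.Exit} {i : ℕ} (hi : 0 < i ∧ i < e.t.length) (x : Γ.V) :
    pos hC e i ≠ Sum.inl x := by
  rw [pos_of_lt hC hi]
  exact Sum.inr_ne_inl

theorem pos_eq_inr_iff {e : Γ.Exit} {i : ℕ} (hi : i ≤ e.t.length) :
    (∀ x, pos hC e i ≠ Sum.inl x) ↔ 0 < i ∧ i < e.t.length := by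
  refine ⟨fun h => ⟨?_, ?_⟩, fun h => pos_ne_inl hC h⟩
  · by_contra h0
    obtain rfl : i = 0 := by omega
    exact h _ (pos_zero hC e)
  · by_contra h0
    obtain rfl : i = e.t.length := by omega
    exact h _ (pos_length hC e)

theorem pos_flip (e : Γ.Exit) {i : ℕ} (hi : i ≤ e.t.length) :
    pos hC (e.flip hC) (e.t.length - i) = pos hC e i := by
  rcases Nat.eq_zero_or_pos i with rfl | h0
  · have := pos_length hC (e.flip hC)
    rw [Exit.flip_length] at this
    rw [Nat.sub_zero, this, pos_zero, Exit.flip_y]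
  rcases hi.eq_or_lt with rfl | h1
  · rw [Nat.sub_self, pos_zero, pos_length, Exit.flip_x]
  · rw [pos_eq_iff hC (by simp; omega) ⟨h0, h1⟩]
    refine Or.inr (Or.inl ?_)
    rw [Exit.flip_flip, Exit.flip_length, Nat.sub_sub_self hi]
    exact Exit.Share.refl _ _

theorem pos_eq_of_share {e e' : Γ.Exit} {i j : ℕ} (hi : i < e.t.length) (hj : j < e'.t.length)
    (h : Exit.Share e i e' j) : pos hC e i = pos hC e' j := by
  rcases Nat.eq_zero_or_pos i with rfl | h0
  · obtain rfl := h.2.1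
    simp [pos_zero, h.1]
  · exact (pos_eq_iff hC ⟨h0, hi⟩ ⟨h.2.1 ▸ h0, hj⟩).2 (Or.inl h)

/-- The edges of the next stage. -/
inductive NextE : Γ.NextV hC → S × Bool → Γ.NextV hC → Prop
  | old {x a y} : Γ.E x a y → NextE (Sum.inl x) a (Sum.inl y)
  | new (e : Γ.Exit) (i : ℕ) {a} : e.t[i]? = some a → NextE (pos hC e i) a (pos hC e (i + 1))

theorem NextE.symm {p q : Γ.NextV hC} {a : S × Bool} (h : NextE hC p a q) :
    NextE hC q (letterInv a) p := by
  rcases h with h | ⟨e, i, ha⟩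
  · exact NextE.old (Γ.symm _ _ _ h)
  · obtain ⟨hi, -⟩ := List.getElem?_eq_some_iff.1 ha
    rw [← pos_flip hC e hi.le, ← pos_flip hC e (Nat.succ_le_of_lt hi)]
    have h1 := e.flip_getElem? hC hi
    rw [ha, Option.map_some] at h1
    have h2 := NextE.new (hC := hC) (e.flip hC) _ h1
    rwa [show e.t.length - 1 - i = e.t.length - (i + 1) by omega,
      show e.t.length - (i + 1) + 1 = e.t.length - i by omega] at h2

theorem share_succ {e e' : Γ.Exit} {i j : ℕ} {a : S × Bool} (h : Exit.Share e i e' j)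
    (ha : e.t[i]? = some a) (ha' : e'.t[j]? = some a) : Exit.Share e (i + 1) e' (j + 1) := by
  obtain ⟨h1, rfl, h3⟩ := h
  exact ⟨h1, rfl, by simp [List.take_add_one, h3, ha, ha']⟩

include hC in
theorem Exit.isReduced (e : Γ.Exit) : FreeGroup.IsReduced e.t := by
  have h : FreeGroup.IsReduced (e.t ++ e.σ) := hC.reduced _ e.mem
  exact List.IsChain.left_of_append h

/-- If `f` read backwards arrives where `e` is, at position `j`, the edge arriving there is not
the reverse of the edge of `e` arriving there. -/
theorem no_backtrack {e f : Γ.Exit} {i j : ℕ} {a : S × Bool} (hj : 0 < j)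
    (hi : i < f.t.length) (h : Exit.Share (f.flip hC) (f.t.length - i) e j)
    (ha : f.t[i]? = some a) : e.t[j - 1]? = some (letterInv a) := by
  have h1 := f.flip_getElem? hC hi
  rw [ha, Option.map_some] at h1
  have h2 := h.2.1
  rw [← h.getElem? (by omega), show j - 1 = f.t.length - 1 - i by omega, h1]

theorem NextE.det {p q q' : Γ.NextV hC} {a : S × Bool} (h : NextE hC p a q)
    (h' : NextE hC p a q') : q = q' := by
  have old_new : ∀ {x : Γ.V} {y : Γ.V} {e : Γ.Exit} {i : ℕ}, Γ.E x a y → e.t[i]? = some a →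
      Sum.inl x = pos hC e i → False := by
    intro x y e i hE ha hx
    obtain ⟨hi, -⟩ := List.getElem?_eq_some_iff.1 ha
    rcases Nat.eq_zero_or_pos i with rfl | h0
    · rw [pos_zero] at hx
      obtain rfl := Sum.inl_injective hx
      exact e.out a ha y hE
    · exact pos_ne_inl hC ⟨h0, hi⟩ _ hx.symm
  have share : ∀ {e e' : Γ.Exit} {i j : ℕ}, Exit.Share e i e' j → e.t[i]? = some a →
      e'.t[j]? = some a → pos hC e (i + 1) = pos hC e' (j + 1) := by
    intro e e' i j hs ha ha'
    obtain ⟨hi, -⟩ := List.getElem?_eq_some_iff.1 ha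
    obtain ⟨hj, -⟩ := List.getElem?_eq_some_iff.1 ha'
    have hs' := share_succ hs ha ha'
    rcases hs'.eq_or_small hC hi hj with rfl | ⟨h1, h2⟩
    · rw [hs.2.1]
    · have := e.lt_length hC
      have := e'.lt_length hC
      exact pos_eq_of_share hC (by omega) (by omega) hs'
  rcases h with @⟨x, _, y, hE⟩ | ⟨e, i, ha⟩
  · generalize hp : (Sum.inl x : Γ.NextV hC) = p at h'
    rcases h' with @⟨x', _, y', hE'⟩ | ⟨e, i, ha⟩
    · obtain rfl := Sum.inl_injective hp
      rw [Γ.det _ _ _ _ hE hE']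
    · exact (old_new hE ha hp).elim
  · generalize hp : pos hC e i = p at h'
    rcases h' with @⟨x', _, y', hE'⟩ | ⟨e', j, ha'⟩
    · exact (old_new hE' ha hp.symm).elim
    · obtain ⟨hi, -⟩ := List.getElem?_eq_some_iff.1 ha
      obtain ⟨hj, -⟩ := List.getElem?_eq_some_iff.1 ha'
      rcases Nat.eq_zero_or_pos i with rfl | i0
      · rcases Nat.eq_zero_or_pos j with rfl | j0
        · exact share ⟨Sum.inl_injective hp, rfl, by simp⟩ ha ha'
        · exact (pos_ne_inl hC ⟨j0, hj⟩ _ hp.symm).elim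
      rcases Nat.eq_zero_or_pos j with rfl | j0
      · exact (pos_ne_inl hC ⟨i0, hi⟩ _ hp).elim
      rcases (pos_eq_iff hC ⟨i0, hi⟩ ⟨j0, hj⟩).1 hp with h | h | h | h
      · exact share h ha ha'
      · have h1 := no_backtrack hC j0 hi h ha
        have h2 := IsReduced.getElem?_succ_ne (e'.isReduced hC) h1
          (by rwa [Nat.sub_add_cancel j0])
        simp at h2
      · have h1 := no_backtrack hC i0 hj h.symm ha'
        have h2 := IsReduced.getElem?_succ_ne (e.isReduced hC) h1
          (by rwa [Nat.sub_add_cancel i0])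
        simp at h2
      · rw [← pos_flip hC e (Nat.succ_le_of_lt hi), ← pos_flip hC e' (Nat.succ_le_of_lt hj)]
        have := h.2.1
        exact pos_eq_of_share hC (by simp; omega) (by simp; omega)
          (h.mono (by omega) (by omega))

/-! ### The height function -/

/-- The height at position `i` of an exit. -/
def Exit.height (e : Γ.Exit) (i : ℕ) : ℤ :=
  min (Γ.height e.x + i) (Γ.height e.y + e.t.length - i)

theorem Exit.height_x_le (e : Γ.Exit) : Γ.height e.x ≤ Γ.height e.y + e.σ.length :=
  e.path.le_add_length Γ.lip

theorem Exit.height_flip (e : Γ.Exit) {i : ℕ} (hi : i ≤ e.t.length) :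
    (e.flip hC).height (e.t.length - i) = e.height i := by
  unfold Exit.height
  rw [min_comm, Exit.flip_length, Exit.flip_x, Exit.flip_y]
  push_cast [hi]
  congr 1 <;> ring

include hC in
theorem Exit.height_of_small (e : Γ.Exit) {i : ℕ} (hi : 6 * i ≤ e.rel.length) :
    e.height i = Γ.height e.x + i := by
  unfold Exit.height
  have h1 := e.height_x_le
  have h2 := e.length_σ_lt hC
  have h3 := e.length_rel
  apply min_eq_left
  omega

include hC in
theorem height_share {e e' : Γ.Exit} {i j : ℕ} (hi : i ≤ e.t.length) (hj : j ≤ e'.t.length)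
    (h : Exit.Share e i e' j) : e.height i = e'.height j := by
  rcases h.eq_or_small hC hi hj with rfl | ⟨h1, h2⟩
  · rw [h.2.1]
  · rw [e.height_of_small hC h1.le, e'.height_of_small hC h2.le, h.1, h.2.1]

theorem height_meet {e e' : Γ.Exit} {i j : ℕ} (hi : i ≤ e.t.length) (hj : j ≤ e'.t.length)
    (h : Γ.Meet hC e i e' j) : e.height i = e'.height j := by
  have fi := e.height_flip hC hi
  have fj := e'.height_flip hC hj
  rcases h with h | h | h | h
  · exact height_share hC hi hj h
  · rw [← fi]; exact height_share hC (by simp) hj h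
  · rw [← fj]; exact height_share hC hi (by simp) h
  · rw [← fi, ← fj]; exact height_share hC (by simp) (by simp) h

/-- The height function of the next stage. -/
def nextHeight : Γ.NextV hC → ℤ :=
  Sum.elim Γ.height (Quotient.lift (fun p : Γ.Pt => p.1.1.height p.1.2)
    (fun p q h => height_meet hC p.2.2.le q.2.2.le h))

theorem nextHeight_pos (e : Γ.Exit) {i : ℕ} (hi : i ≤ e.t.length) :
    nextHeight hC (pos hC e i) = e.height i := by
  have h2 := e.length_σ_lt hC
  have h3 := e.length_rel
  rcases Nat.eq_zero_or_pos i with rfl | h0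
  · rw [pos_zero, e.height_of_small hC (by omega)]
    simp [nextHeight]
  rcases hi.eq_or_lt with rfl | h1
  · have := (e.flip hC).height_of_small hC (i := 0) (by omega)
    rw [← e.height_flip hC hi, Nat.sub_self, this, pos_length]
    simp [nextHeight]
  · rw [pos_of_lt hC ⟨h0, h1⟩]
    rfl

theorem nextHeight_lip {p q : Γ.NextV hC} {a : S × Bool} (h : NextE hC p a q) :
    nextHeight hC q ≤ nextHeight hC p + 1 := by
  rcases h with h | ⟨e, i, ha⟩
  · exact Γ.lip _ _ _ h
  · obtain ⟨hi, -⟩ := List.getElem?_eq_some_iff.1 ha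
    rw [nextHeight_pos hC e hi.le, nextHeight_pos hC e (Nat.succ_le_of_lt hi)]
    unfold Exit.height
    push_cast
    omega

end Stage

namespace Stage

variable {S : Type u} {C : Set (Word S)} {Γ : Stage C} (hC : IsSymmSmall C)

/-! ### Relators close up in the next stage -/

theorem path_along (e : Γ.Exit) (i : ℕ) {k : ℕ} (h : i + k ≤ e.t.length) :
    Path (NextE hC) (pos hC e i) ((e.t.drop i).take k) (pos hC e (i + k)) := by
  induction k with
  | zero => simp [Path]
  | succ k ih =>
    have hi : i + k < e.t.length := by omega
    rw [List.take_add_one, List.getElem?_drop, List.getElem?_eq_getElem hi]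
    exact path_append.2 ⟨_, ih (by omega),
      path_singleton.2 (NextE.new e (i + k) (List.getElem?_eq_getElem hi))⟩

theorem path_old {x y : Γ.V} {w : Word S} (h : Path Γ.E x w y) :
    Path (NextE hC) (Sum.inl x) w (Sum.inl y) :=
  h.map (Sum.inl : Γ.V → Γ.NextV hC) fun _ _ _ h => NextE.old h

theorem path_rel (e : Γ.Exit) : Path (NextE hC) (Sum.inl e.x) e.rel (Sum.inl e.x) := by
  have h := path_along hC e 0 (k := e.t.length) (by simp)
  rw [pos_zero, zero_add, pos_length, List.drop_zero, List.take_length] at h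
  exact path_append.2 ⟨_, h, path_old hC e.path⟩

theorem path_rel_pos (e : Γ.Exit) {i : ℕ} (hi : i ≤ e.t.length) :
    Path (NextE hC) (pos hC e i) (e.t.drop i ++ e.σ ++ e.t.take i) (pos hC e i) := by
  have h := path_along hC e 0 (k := i) (by simpa using hi)
  rw [pos_zero, zero_add, List.drop_zero] at h
  refine Path.rotate_closed (E := NextE hC) (fun _ _ _ _ h h' => NextE.det hC h h') h ?_
  rw [← List.append_assoc, List.take_append_drop]
  exact path_rel hC e

/-- Every relator which cannot be read at `z` from its first letter on is carried by an exit. -/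
theorem exists_exit (hC : IsSymmSmall C) {z : Γ.V} {a : S × Bool} {s : Word S}
    (hr : a :: s ∈ C) (hz : ∀ z', ¬ Γ.E z a z') :
    ∃ e : Γ.Exit, e.x = z ∧ e.rel = a :: s := by
  have hr' := hC.inv _ hr
  rcases exists_path_or_stuck Γ.E z (FreeGroup.invRev (a :: s)) with
    ⟨y, hy⟩ | ⟨p, b, s', y, hps, hp, hb⟩
  · have h1 := Γ.closed _ hr' _ (List.prefix_refl _) (by omega) _ _ hy
    have h2 := h1.symm Γ.symm
    rw [FreeGroup.invRev_invRev] at h2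
    obtain ⟨w, hw, -⟩ := h2
    exact (hz w hw).elim
  · have hsplit : a :: s = FreeGroup.invRev (b :: s') ++ FreeGroup.invRev p := by
      rw [← invRev_append, ← hps, FreeGroup.invRev_invRev]
    have ht : FreeGroup.invRev (b :: s') = FreeGroup.invRev s' ++ [letterInv b] := by
      simp [invRev_eq]
    refine ⟨⟨z, y, FreeGroup.invRev (b :: s'), FreeGroup.invRev p, hsplit ▸ hr, by simp [ht],
      hp.symm Γ.symm, ?_, ?_⟩, rfl, hsplit.symm⟩
    · intro c hc
      have h1 : (a :: s)[0]? = some c := by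
        rw [hsplit, List.getElem?_append_left (by simp), hc]
      simp only [List.getElem?_cons_zero, Option.some.injEq] at h1
      exact h1 ▸ hz
    · intro c hc z' hz'
      rw [ht] at hc
      simp at hc
      refine hb z' ?_
      have := Γ.symm _ _ _ hz'
      rwa [← hc, letterInv_letterInv] at this

theorem path_old_rel {r : Word S} (hr : r ∈ C) (x : Γ.V) :
    Path (NextE hC) (Sum.inl x) r (Sum.inl x) := by
  rcases exists_path_or_stuck Γ.E x r with ⟨y, hy⟩ | ⟨p, a, s, z, rfl, hp, ha⟩
  · exact path_old hC (Γ.closed _ hr _ (List.prefix_refl _) (by omega) _ _ hy)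
  · obtain ⟨e, rfl, he⟩ := exists_exit hC (hC.rotate _ _ hr) ha
    refine (path_old hC hp).closed_of_rotate (fun _ _ _ h => NextE.symm hC h)
      (fun _ _ _ _ h h' => NextE.det hC h h') ?_
    have := path_rel hC e
    rwa [he] at this

/-- A relator which runs for a sixth of its length, or of that of the other relator, along an
exit coincides with the relator carried by this exit. -/
theorem path_of_long_run {r w₁ w₂ : Word S} {e : Γ.Exit} {i k : ℕ} (hik : i + k ≤ e.t.length)
    (hr : r ∈ C) (hrw : r = w₁ ++ (e.t.drop i).take k ++ w₂)
    (hk : r.length ≤ 6 * k ∨ e.rel.length ≤ 6 * k) {q : Γ.NextV hC}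
    (hq : Path (NextE hC) q w₁ (pos hC e i)) : Path (NextE hC) q r q := by
  have m1 : (e.t.drop i).take k ++ w₂ ++ w₁ ∈ C :=
    hC.rotate _ _ (by rwa [← List.append_assoc, ← hrw])
  have m2 : e.t.drop i ++ e.σ ++ e.t.take i ∈ C :=
    hC.rotate _ _ (by rw [← List.append_assoc, List.take_append_drop]; exact e.mem)
  have l : ((e.t.drop i).take k).length = k := by simp; omega
  have heq : (e.t.drop i).take k ++ w₂ ++ w₁ = e.t.drop i ++ e.σ ++ e.t.take i := by
    by_contra hne
    have p1 : (e.t.drop i).take k <+: (e.t.drop i).take k ++ w₂ ++ w₁ := by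
      rw [List.append_assoc]; exact List.prefix_append _ _
    have p2 : (e.t.drop i).take k <+: e.t.drop i ++ e.σ ++ e.t.take i := by
      rw [List.append_assoc]; exact (List.take_prefix _ _).trans (List.prefix_append _ _)
    have q1 := hC.piece _ m1 _ m2 hne _ p1 p2
    have q2 := hC.piece _ m2 _ m1 (Ne.symm hne) _ p2 p1
    have e1 := congrArg List.length hrw
    have e2 := e.length_rel
    simp only [List.length_append, List.length_drop, List.length_take] at q1 q2 e1 l
    omega
  rw [hrw, List.append_assoc]
  refine hq.closed_of_rotate (fun _ _ _ h => NextE.symm hC h)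
    (fun _ _ _ _ h h' => NextE.det hC h h') ?_
  rw [heq]
  exact path_rel_pos hC e (by omega)

/-- A path which arrives along `e` and goes on, without backtracking, along `e'` follows `e'` all
the time, or `e` all the time, or turns near the end of `e` and the beginning of `e'`. -/
theorem turn {e e' : Γ.Exit} {n j : ℕ} {a b : S × Bool} (hn : 0 < n ∧ n < e.t.length)
    (hj : 0 < j ∧ j < e'.t.length) (h : pos hC e n = pos hC e' j)
    (hb : e.t[n - 1]? = some b) (ha : e'.t[j]? = some a) (hab : a ≠ letterInv b) :
    Exit.Share e n e' j ∨
      Exit.Share (e.flip hC) (e.t.length - n) (e'.flip hC) (e'.t.length - j) ∨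
      (6 * (e.t.length - n) < e.rel.length ∧ 6 * j < e'.rel.length) := by
  rcases (pos_eq_iff hC hn hj).1 h with h | h | h | h
  · exact Or.inl h
  · rcases h.eq_or_small hC (by simp) hj.2.le with rfl | h1
    · exfalso
      have h2 := e.flip_getElem? hC (i := n - 1) (by omega)
      have h3 := h.2.1
      rw [hb, show e.t.length - 1 - (n - 1) = j by omega, ha, Option.map_some] at h2
      exact hab (Option.some_injective _ h2)
    · rw [Exit.flip_length_rel] at h1
      exact Or.inr (Or.inr h1)
  · exfalso
    have h1 := no_backtrack hC hn.1 hj.2 h.symm ha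
    rw [hb] at h1
    apply hab
    rw [Option.some_injective _ h1, letterInv_letterInv]
  · exact Or.inr (Or.inl h)

theorem take_drop_succ {e : Γ.Exit} {i k : ℕ} {a : S × Bool} (h : e.t[i + k]? = some a) :
    (e.t.drop i).take (k + 1) = (e.t.drop i).take k ++ [a] := by
  rw [List.take_add_one, List.getElem?_drop, h]
  rfl

/-- A path through new vertices, labelled by a prefix of a relator which does not close up, runs
along an exit, possibly after a short initial run along another exit. -/
theorem run_structure {r : Word S} (hr : r ∈ C) {q : Γ.NextV hC}
    (hq : ¬ Path (NextE hC) q r q)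
    (hnew : ∀ p, p <+: r → ∀ v, ¬ Path (NextE hC) q p (Sum.inl v)) (p : Word S) (hne : p ≠ [])
    (hp : p <+: r) (q' : Γ.NextV hC) (hpath : Path (NextE hC) q p q') :
    ∃ (p₁ : Word S) (e : Γ.Exit) (i k : ℕ), p = p₁ ++ (e.t.drop i).take (k + 1) ∧
      0 < i ∧ i + (k + 1) < e.t.length ∧ Path (NextE hC) q p₁ (pos hC e i) ∧
      6 * p₁.length < r.length ∧ (p₁ = [] ∨ 6 * i < e.rel.length) ∧
      q' = pos hC e (i + (k + 1)) := by
  induction p using List.reverseRecOn generalizing q' with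
  | nil => exact (hne rfl).elim
  | append_singleton p a ih =>
    have hp' : p <+: r := (List.prefix_append _ _).trans hp
    have hq' := hnew _ hp
    obtain ⟨q₁, hq₁, hE⟩ := path_append.1 hpath
    rw [path_singleton] at hE
    have hE' := hE
    rcases hE with hE | ⟨e', j, ha⟩
    · exact (hnew _ hp' _ hq₁).elim
    obtain ⟨hj, -⟩ := List.getElem?_eq_some_iff.1 ha
    have j0 : 0 < j := ((pos_eq_inr_iff hC hj.le).1 fun v hv => hnew _ hp' v (hv ▸ hq₁)).1
    have j1 : j + 1 < e'.t.length :=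
      ((pos_eq_inr_iff hC (Nat.succ_le_of_lt hj)).1 fun v hv => hq' v (hv ▸ hpath)).2
    have hlast : [a] = (e'.t.drop j).take (0 + 1) := by
      rw [take_drop_succ (a := a) (by simpa using ha)]; rfl
    by_cases hpn : p = []
    · subst hpn
      refine ⟨[], e', j, 0, by rw [← hlast], j0, j1, hq₁, ?_, Or.inl rfl, rfl⟩
      simpa using List.length_pos_iff.2 (hC.ne_nil r hr)
    obtain ⟨p₁, e, i, k, rfl, i0, hik, hp₁, hl, hor, hpos⟩ := ih hpn hp' _ hq₁
    obtain ⟨v, hv⟩ := hp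
    have hlong : 6 * (k + 1) < r.length ∧ 6 * (k + 1) < e.rel.length := by
      by_contra hc
      refine hq (path_of_long_run hC (k := k + 1) hik.le hr (w₁ := p₁) (w₂ := [a] ++ v) ?_ ?_ hp₁)
      · rw [← hv]; simp
      · omega
    have hbk : i + k < e.t.length := by omega
    have hb := List.getElem?_eq_getElem hbk
    set b := e.t[i + k]
    have hab : a ≠ letterInv b := by
      have hred := hC.reduced r hr
      rw [← hv, take_drop_succ hb] at hred
      refine IsReduced.ne_of_append (u := p₁ ++ (e.t.drop i).take k) (v := v) (a := b) (b := a) ?_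
      simpa using hred
    rcases turn hC ⟨by omega, hik⟩ ⟨j0, hj⟩ hpos.symm (by simpa using hb) ha hab with
      hs | hs | hs
    · have hjn := hs.2.1
      have hs1 : Exit.Share e i e' i := hs.mono (by omega) rfl
      refine ⟨p₁, e', i, k + 1, ?_, i0, by omega, ?_, hl, ?_, ?_⟩
      · rw [List.append_assoc, take_drop_succ (e := e') (by rw [hjn]; exact ha)]
        have h3 := congrArg (List.drop i) hs.2.2
        rw [← hjn, List.drop_take, List.drop_take, Nat.add_sub_cancel_left] at h3
        rw [h3]
      · rwa [← pos_eq_of_share hC (by omega) (by omega) hs1]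
      · rcases hs.eq_or_small hC hik.le hj.le with rfl | h6
        · exact hor
        · right; omega
      · rw [← hjn]; rfl
    · have hjn := hs.2.1
      have hin : i + (k + 1) < e.t.length := hik
      have h1 := e'.flip_getElem? hC hj
      have h2 := e.flip_getElem? hC hin
      rw [show e.t.length - 1 - (i + (k + 1)) = e'.t.length - 1 - j by omega,
        hs.getElem? (by omega), h1, ha] at h2
      obtain ⟨c, hc, hca⟩ := Option.map_eq_some_iff.1 h2.symm
      obtain rfl := letterInv_injective hca
      refine ⟨p₁, e, i, k + 1, ?_, i0, by omega, hp₁, hl, hor, ?_⟩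
      · rw [take_drop_succ (k := k + 1) hc, List.append_assoc]
      · rw [hpos] at hE'
        exact NextE.det hC hE' (NextE.new e _ hc)
    · rcases hor with rfl | hor
      · refine ⟨_, e', j, 0, by rw [← hlast], j0, j1, hq₁, ?_, Or.inr hs.2, rfl⟩
        have : ((e.t.drop i).take (k + 1)).length ≤ k + 1 := List.length_take_le _ _
        simp only [List.nil_append]
        omega
      · exfalso
        have := e.lt_length hC
        omega

theorem next_closed {r p : Word S} (hr : r ∈ C) (hp : p <+: r) (hl : r.length ≤ 3 * p.length)
    {q q' : Γ.NextV hC} (hpath : Path (NextE hC) q p q') : Path (NextE hC) q r q := by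
  by_contra hq
  have hnew : ∀ p, p <+: r → ∀ v, ¬ Path (NextE hC) q p (Sum.inl v) := by
    rintro p ⟨s, rfl⟩ v hv
    exact hq (hv.closed_of_rotate (fun _ _ _ h => NextE.symm hC h)
      (fun _ _ _ _ h h' => NextE.det hC h h') (path_old_rel hC (hC.rotate _ _ hr) v))
  have hne : p ≠ [] := by
    rintro rfl
    exact hC.ne_nil r hr (List.length_eq_zero_iff.1 (by simpa using hl))
  obtain ⟨p₁, e, i, k, rfl, -, hik, hp₁, hl', -, -⟩ :=
    run_structure hC hr hq hnew p hne hp q' hpath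
  obtain ⟨v, hv⟩ := hp
  refine hq (path_of_long_run hC (k := k + 1) hik.le hr hv.symm (Or.inl ?_) hp₁)
  have : ((e.t.drop i).take (k + 1)).length ≤ k + 1 := List.length_take_le _ _
  rw [List.length_append] at hl
  omega

/-- The next stage: all relators are attached at all vertices. -/
def next (Γ : Stage C) : Stage C where
  V := Γ.NextV hC
  E := NextE hC
  symm _ _ _ h := NextE.symm hC h
  det _ _ _ _ h h' := NextE.det hC h h'
  height := nextHeight hC
  lip _ _ _ h := nextHeight_lip hC h
  closed _ hr _ hp hl _ _ h := next_closed hC hr hp hl h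

/-- A single vertex without edges. -/
def point : Stage C where
  V := PUnit
  E _ _ _ := False
  symm _ _ _ h := h.elim
  det _ _ _ _ h _ := h.elim
  height _ := 0
  lip _ _ _ h := h.elim
  closed := by
    intro r hr p hp hl x y h
    rcases p with _ | ⟨a, p⟩
    · exact (hC.ne_nil r hr (List.length_eq_zero_iff.1 (by simpa using hl))).elim
    · obtain ⟨z, hz, -⟩ := h
      exact hz.elim

end Stage

namespace Stage

variable {S : Type u} {C : Set (Word S)} (hC : IsSymmSmall C)

/-! ### The limit of the stages and the action of words on it -/

/-- The stages of the construction which starts with a single vertex. -/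
def iter : ℕ → Stage C
  | 0 => point hC
  | n + 1 => next hC (iter n)

/-- The inclusion of a stage into the next one. -/
def incl {n : ℕ} (x : (iter hC n).V) : (iter hC (n + 1)).V :=
  (Sum.inl x : (iter hC n).NextV hC)

theorem incl_edge {n : ℕ} {x y : (iter hC n).V} {a : S × Bool} (h : (iter hC n).E x a y) :
    (iter hC (n + 1)).E (incl hC x) a (incl hC y) :=
  NextE.old h

/-- A vertex of a stage precedes its image in the next stage. -/
def LimRel (p q : Σ n, (iter hC n).V) : Prop := q = ⟨p.1 + 1, incl hC p.2⟩

/-- The union of all stages. -/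
abbrev Lim : Type u := Quot (LimRel hC)

/-- A vertex of a stage as a vertex of the limit. -/
def toLim {n : ℕ} (x : (iter hC n).V) : Lim hC := Quot.mk _ ⟨n, x⟩

theorem toLim_incl {n : ℕ} (x : (iter hC n).V) : toLim hC (incl hC x) = toLim hC x :=
  (Quot.sound (r := LimRel hC) (a := ⟨n, x⟩) rfl).symm

theorem exists_toLim (p : Lim hC) : ∃ n, ∃ x : (iter hC n).V, toLim hC x = p := by
  obtain ⟨⟨n, x⟩, rfl⟩ := Quot.exists_rep p
  exact ⟨n, x, rfl⟩

/-- The height function on the limit. -/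
def limHeight : Lim hC → ℤ :=
  Quot.lift (fun p => (iter hC p.1).height p.2) (by rintro ⟨n, x⟩ _ rfl; rfl)

theorem limHeight_toLim {n : ℕ} (x : (iter hC n).V) :
    limHeight hC (toLim hC x) = (iter hC n).height x := rfl

/-- The vertex of the first stage. -/
def base : Lim hC := toLim hC (n := 0) (PUnit.unit : (point hC).V)

theorem toLim_zero (x : (iter hC 0).V) : toLim hC x = base hC := rfl

/-- The letters which occur in relators. -/
def Occurs (C : Set (Word S)) (a : S × Bool) : Prop := ∃ s, a :: s ∈ C

include hC in
theorem occurs_of_mem {r : Word S} (hr : r ∈ C) {a : S × Bool} (ha : a ∈ r) : Occurs C a := by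
  obtain ⟨u, v, rfl⟩ := List.append_of_mem ha
  exact ⟨v ++ u, hC.rotate _ _ hr⟩

include hC in
theorem Occurs.inv {a : S × Bool} (ha : Occurs C a) : Occurs C (letterInv a) := by
  obtain ⟨s, hs⟩ := ha
  refine occurs_of_mem hC (hC.inv _ hs) ?_
  simp [invRev_eq]

theorem exists_edge {a : S × Bool} (ha : Occurs C a) {n : ℕ} (x : (iter hC n).V) :
    ∃ z, (iter hC (n + 1)).E (incl hC x) a z := by
  obtain ⟨s, hs⟩ := ha
  obtain ⟨z, hz, -⟩ := path_old_rel hC hs x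
  exact ⟨z, hz⟩

open Classical in
/-- The action of a letter on the limit; letters which do not occur in relators act trivially. -/
noncomputable def act (a : S × Bool) : Lim hC → Lim hC :=
  if ha : Occurs C a then
    Quot.lift (fun p => toLim hC (exists_edge hC ha p.2).choose) (by
      rintro ⟨n, x⟩ _ rfl
      have h1 := (exists_edge hC ha x).choose_spec
      have h2 := (exists_edge hC ha (incl hC x)).choose_spec
      rw [(iter hC _).det _ _ _ _ h2 (incl_edge hC h1), toLim_incl])
  else id

theorem act_of_edge {a : S × Bool} (ha : Occurs C a) {n : ℕ} {x y : (iter hC n).V}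
    (h : (iter hC n).E x a y) : act hC a (toLim hC x) = toLim hC y := by
  have h1 := (exists_edge hC ha x).choose_spec
  have h2 : act hC a (toLim hC x) = toLim hC (exists_edge hC ha x).choose := by
    rw [act, dif_pos ha]; rfl
  rw [h2, (iter hC _).det _ _ _ _ h1 (incl_edge hC h), toLim_incl]

theorem act_of_not_occurs {a : S × Bool} (ha : ¬ Occurs C a) (p : Lim hC) : act hC a p = p := by
  rw [act, dif_neg ha]; rfl

theorem act_inv_act (a : S × Bool) (p : Lim hC) : act hC (letterInv a) (act hC a p) = p := by
  by_cases ha : Occurs C a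
  · obtain ⟨n, x, rfl⟩ := exists_toLim hC p
    obtain ⟨z, hz⟩ := exists_edge hC ha x
    rw [← toLim_incl, act_of_edge hC ha hz, act_of_edge hC (ha.inv hC) ((iter hC _).symm _ _ _ hz)]
  · have ha' : ¬ Occurs C (letterInv a) := fun h => ha (by simpa using h.inv hC)
    rw [act_of_not_occurs hC ha, act_of_not_occurs hC ha']

theorem limHeight_act (a : S × Bool) (p : Lim hC) :
    limHeight hC (act hC a p) ≤ limHeight hC p + 1 := by
  by_cases ha : Occurs C a
  · obtain ⟨n, x, rfl⟩ := exists_toLim hC p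
    obtain ⟨z, hz⟩ := exists_edge hC ha x
    rw [← toLim_incl, act_of_edge hC ha hz, limHeight_toLim, limHeight_toLim]
    exact (iter hC _).lip _ _ _ hz
  · rw [act_of_not_occurs hC ha]
    omega

/-- The action of a word, read from left to right. -/
noncomputable def actWord (p : Lim hC) (w : Word S) : Lim hC := w.foldl (fun p a => act hC a p) p

theorem limHeight_actWord (p : Lim hC) (w : Word S) :
    limHeight hC (actWord hC p w) ≤ limHeight hC p + w.length := by
  induction w generalizing p with
  | nil => simp [actWord]
  | cons a w ih =>
    have h1 := ih (act hC a p)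
    have h2 := limHeight_act hC a p
    push_cast [List.length_cons]
    exact h1.trans (by linarith)

theorem actWord_of_path {n : ℕ} {x y : (iter hC n).V} {w : Word S}
    (hw : ∀ a ∈ w, Occurs C a) (h : Path (iter hC n).E x w y) :
    actWord hC (toLim hC x) w = toLim hC y := by
  induction w generalizing x with
  | nil => cases h; rfl
  | cons a w ih =>
    obtain ⟨z, hz, h⟩ := h
    have h1 := ih (fun b hb => hw b (by simp [hb])) h
    rw [← act_of_edge hC (hw a (by simp)) hz] at h1
    exact h1

theorem actWord_rel {r : Word S} (hr : r ∈ C) (p : Lim hC) : actWord hC p r = p := by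
  obtain ⟨n, x, rfl⟩ := exists_toLim hC p
  have h : Path (iter hC (n + 1)).E (incl hC x) r (incl hC x) := path_old_rel hC hr x
  rw [← toLim_incl]
  exact actWord_of_path hC (fun a ha => occurs_of_mem hC hr ha) h

/-- The permutation of the limit given by a letter. -/
noncomputable def actPerm (a : S × Bool) : Equiv.Perm (Lim hC) where
  toFun := act hC a
  invFun := act hC (letterInv a)
  left_inv := act_inv_act hC a
  right_inv p := by simpa using act_inv_act hC (letterInv a) p

/-- The homomorphism which sends a word to the inverse of its action. -/
noncomputable def actHom : FreeGroup S →* Equiv.Perm (Lim hC) :=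
  FreeGroup.lift fun s => actPerm hC (s, false)

theorem actHom_actWord (p : Lim hC) (w : Word S) :
    actHom hC (FreeGroup.mk w) (actWord hC p w) = p := by
  induction w generalizing p with
  | nil => rfl
  | cons a w ih =>
    have h1 : actHom hC (FreeGroup.mk [a]) = actPerm hC (letterInv a) := by
      obtain ⟨s, b⟩ := a
      rw [actHom, FreeGroup.lift_mk]
      cases b
      · ext p
        simp only [List.map_cons, List.map_nil, List.prod_cons, List.prod_nil, mul_one]
        rfl
      · simp [letterInv]
    have h2 := ih (act hC a p)
    rw [show a :: w = [a] ++ w from rfl, ← FreeGroup.mul_mk, map_mul, Equiv.Perm.mul_apply, h1]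
    change actPerm hC (letterInv a) (actHom hC (FreeGroup.mk w) (actWord hC (act hC a p) w)) = p
    rw [h2]
    exact act_inv_act hC a p

/-- Along a relator, heights over the base point grow as in a cycle. -/
theorem limHeight_actWord_take {r : Word S} (hr : r ∈ C) {i : ℕ} (hi : i ≤ r.length) :
    limHeight hC (actWord hC (base hC) (r.take i)) =
      min (i : ℤ) (r.length - i) := by
  rcases r with _ | ⟨a, s⟩
  · exact (hC.ne_nil _ hr rfl).elim
  obtain ⟨e, -, he⟩ := exists_exit (Γ := iter hC 0) hC (z := (PUnit.unit : (point hC).V)) hr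
    (fun _ h => h)
  have hσ : e.σ = [] := by
    have := e.path
    rcases h : e.σ with _ | ⟨b, σ⟩
    · rfl
    · rw [h] at this
      obtain ⟨z, hz, -⟩ := this
      exact hz.elim
  have ht : e.t = a :: s := by rw [← he, Exit.rel, hσ, List.append_nil]
  have hi' : i ≤ e.t.length := ht ▸ hi
  have h := path_along hC e 0 (k := i) (by simpa using hi')
  rw [pos_zero, zero_add, List.drop_zero] at h
  have h' : Path (iter hC 1).E (incl hC e.x) (e.t.take i) (pos hC e i) := h
  have h2 := actWord_of_path hC
    (fun b hb => occurs_of_mem hC hr (ht ▸ List.mem_of_mem_take hb)) h'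
  have h3 : limHeight hC (toLim hC (n := 1) (pos hC e i)) = e.height i :=
    nextHeight_pos hC e hi'
  have h4 : e.height i = min (0 + (i : ℤ)) (0 + e.t.length - i) := rfl
  rw [← toLim_zero hC e.x, ← toLim_incl, ← ht, h2, h3, h4]
  simp

end Stage

/-! ### Relators are isometrically embedded -/

section Relators

variable {S : Type u} {R : Set (Word S)}

/-- The nonempty elements of the symmetrised set of relators. -/
def relators (R : Set (Word S)) : Set (Word S) := {w | w ∈ symmClosure R ∧ w ≠ []}

theorem IsReduced.invRev {w : Word S} (h : FreeGroup.IsReduced w) :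
    FreeGroup.IsReduced (FreeGroup.invRev w) := by
  unfold FreeGroup.IsReduced at h ⊢
  rw [invRev_eq, List.isChain_reverse, List.isChain_map]
  refine h.imp fun a b hab hba => ?_
  have := hab hba.symm
  simp [letterInv, this]

theorem isReduced_of_isRotated {r w : Word S} (hr : FreeGroup.IsCyclicallyReduced r)
    (h : r ~r w) : FreeGroup.IsReduced w := by
  obtain ⟨n, hn, rfl⟩ := List.isRotated_iff_mod.1 h
  rw [List.rotate_eq_drop_append_take hn]
  obtain ⟨h1, h2⟩ := hr
  rw [← List.take_append_drop n r] at h1 h2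
  generalize r.take n = u at *
  generalize r.drop n = v at *
  unfold FreeGroup.IsReduced at h1 ⊢
  rw [List.isChain_append] at h1 ⊢
  refine ⟨h1.2.1, h1.1, fun a ha b hb => h2 a ?_ b ?_⟩
  · rw [List.getLast?_append, ha]; rfl
  · rw [List.head?_append, hb]; rfl

theorem isRotated_invRev {r w : Word S} (h : r ~r w) :
    FreeGroup.invRev r ~r FreeGroup.invRev w :=
  (h.map letterInv).reverse

theorem isSymmSmall_relators (hR : SmallCancellation (1 / 6) R) : IsSymmSmall (relators R) where
  ne_nil _ h := h.2
  rotate u v h := by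
    obtain ⟨⟨r, hr, h1⟩, h2⟩ := h
    refine ⟨⟨r, hr, h1.imp (fun h => h.trans List.isRotated_append)
      (fun h => h.trans List.isRotated_append)⟩, ?_⟩
    intro h
    apply h2
    simp only [List.append_eq_nil_iff] at h ⊢
    exact h.symm
  inv w h := by
    obtain ⟨⟨r, hr, h1⟩, h2⟩ := h
    refine ⟨⟨r, hr, ?_⟩, ?_⟩
    · rcases h1 with h1 | h1
      · exact Or.inr (isRotated_invRev h1)
      · exact Or.inl (by simpa using isRotated_invRev h1)
    · intro h
      apply h2
      rw [← FreeGroup.invRev_invRev (L₁ := w), h]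
      rfl
  reduced w h := by
    obtain ⟨⟨r, hr, h1 | h1⟩, -⟩ := h
    · exact isReduced_of_isRotated (hR.1 r hr) h1
    · have := isReduced_of_isRotated (hR.1 r hr) (by simpa using isRotated_invRev h1)
      simpa using IsReduced.invRev this
  piece r hr r' hr' hne p hp hp' := by
    have h := hR.2 r hr.1 p ⟨r, hr.1, r', hr'.1, hne, hp, hp'⟩ hp.isInfix
    have h' : (6 : ℝ) * p.length < r.length := by linarith
    exact_mod_cast h'

open Stage in
theorem le_wordDist_one (hR : SmallCancellation (1 / 6) R) {r : Word S} (hr : r ∈ relators R)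
    {i : ℕ} (hi : i ≤ r.length) :
    min i (r.length - i) ≤ wordDist R 1 (evalWord R (r.take i)) := by
  have hC := isSymmSmall_relators hR
  have hker : ∀ x ∈ FreeGroup.mk '' R, actHom hC x = 1 := by
    rintro _ ⟨s, hs, rfl⟩
    by_cases h0 : s = []
    · subst h0; rfl
    · ext p
      have h1 := actHom_actWord hC p s
      rw [actWord_rel hC ⟨⟨s, hs, Or.inl (List.IsRotated.refl s)⟩, h0⟩] at h1
      exact h1
  obtain ⟨v, hv, hv'⟩ := exists_word (R := R) 1 (evalWord R (r.take i))
  rw [one_mul] at hv'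
  have hφ : actHom hC (FreeGroup.mk v) = actHom hC (FreeGroup.mk (r.take i)) :=
    congrArg (PresentedGroup.toGroup hker) hv'
  set p := base hC
  have h1 := actHom_actWord hC p v
  have h2 := actHom_actWord hC p (r.take i)
  rw [← hφ] at h2
  have h3 := (actHom hC (FreeGroup.mk v)).injective (h1.trans h2.symm)
  have h4 := limHeight_actWord hC p v
  rw [h3, limHeight_actWord_take hC hr hi] at h4
  have h5 : limHeight hC p = 0 := rfl
  rw [← hv]
  omega

theorem evalWord_relator {r : Word S} (hr : r ∈ relators R) : evalWord R r = 1 := by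
  have base : ∀ s ∈ R, evalWord R s = 1 := fun s hs =>
    (PresentedGroup.mk_eq_one_iff).2 (Subgroup.subset_normalClosure ⟨s, hs, rfl⟩)
  have rot : ∀ s w : Word S, s ~r w → evalWord R s = 1 → evalWord R w = 1 := by
    intro s w h hs
    obtain ⟨n, hn, rfl⟩ := List.isRotated_iff_mod.1 h
    rw [List.rotate_eq_drop_append_take hn, evalWord_append]
    rw [← List.take_append_drop n s, evalWord_append] at hs
    exact mul_eq_one_comm.1 hs
  obtain ⟨⟨s, hs, h | h⟩, -⟩ := hr
  · exact rot _ _ h (base s hs)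
  · exact rot _ _ h (by rw [evalWord_invRev, base s hs, inv_one])

theorem le_wordDist_take (hR : SmallCancellation (1 / 6) R) {r : Word S} (hr : r ∈ relators R)
    (g : PGroup R) {i j : ℕ} (hij : i ≤ j) (hj : j ≤ r.length) :
    min (j - i) (r.length - (j - i)) ≤
      wordDist R (g * evalWord R (r.take i)) (g * evalWord R (r.take j)) := by
  have hC := isSymmSmall_relators hR
  have hρ : r.drop i ++ r.take i ∈ relators R :=
    hC.rotate _ _ (by rwa [List.take_append_drop])
  have h := le_wordDist_one hR hρ (i := j - i) (by simp; omega)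
  rw [List.take_append_of_le_length (by simp; omega)] at h
  have hl : (r.drop i ++ r.take i).length = r.length := by simp; omega
  rw [hl] at h
  refine h.trans ?_
  obtain ⟨v, hv, hv'⟩ := exists_word (g * evalWord R (r.take i)) (g * evalWord R (r.take j))
  rw [← hv]
  apply wordDist_le
  have hsplit : r.take j = r.take i ++ (r.drop i).take (j - i) := by
    rw [← List.take_add, Nat.add_sub_cancel' hij]
  rw [hsplit, evalWord_append, ← mul_assoc] at hv'
  rw [one_mul]
  exact mul_left_cancel hv'

end Relators

section Geometry

variable {S : Type u} {R : Set (Word S)}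

/-! ### Points on edge paths -/

/-- The name of `edgePoint R g a t`. -/
noncomputable def edgePrePoint (R : Set (Word S)) (g : PGroup R) (a : S × Bool) (t : ℝ) :
    PrePoint R :=
  if a.2 then PrePoint.edge g a.1 (Set.projIcc 0 1 zero_le_one t)
    else PrePoint.edge (g * (PresentedGroup.of a.1)⁻¹) a.1
      (unitInterval.symm (Set.projIcc 0 1 zero_le_one t))

theorem edgePoint_eq (g : PGroup R) (a : S × Bool) (t : ℝ) :
    edgePoint R g a t = SeparationQuotient.mk (edgePrePoint R g a t) := rfl

theorem evalWord_true (s : S) : evalWord R [(s, true)] = PresentedGroup.of s := rfl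

theorem evalWord_false (s : S) : evalWord R [(s, false)] = (PresentedGroup.of s)⁻¹ := by
  rw [← evalWord_true, ← evalWord_invRev]; rfl

theorem edgePrePoint_vert_source (g : PGroup R) (a : S × Bool) (t : ℝ) :
    (edgePrePoint R g a t).vert (!a.2) = g := by
  obtain ⟨s, b⟩ := a
  cases b <;> simp [edgePrePoint, PrePoint.vert]

theorem edgePrePoint_vert_target (g : PGroup R) (a : S × Bool) (t : ℝ) :
    (edgePrePoint R g a t).vert a.2 = g * evalWord R [a] := by
  obtain ⟨s, b⟩ := a
  cases b <;> simp [edgePrePoint, PrePoint.vert, evalWord_true, evalWord_false]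

theorem edgePrePoint_off_source (g : PGroup R) (a : S × Bool) {t : ℝ} (h0 : 0 ≤ t)
    (h1 : t ≤ 1) : (edgePrePoint R g a t).off (!a.2) = t := by
  obtain ⟨s, b⟩ := a
  cases b <;> simp [edgePrePoint, PrePoint.off, Set.projIcc_of_mem zero_le_one ⟨h0, h1⟩]

theorem edgePrePoint_off_target (g : PGroup R) (a : S × Bool) {t : ℝ} (h0 : 0 ≤ t)
    (h1 : t ≤ 1) : (edgePrePoint R g a t).off a.2 = 1 - t := by
  obtain ⟨s, b⟩ := a
  cases b <;> simp [edgePrePoint, PrePoint.off, Set.projIcc_of_mem zero_le_one ⟨h0, h1⟩]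

theorem same_edgePrePoint (g : PGroup R) (a : S × Bool) {t t' : ℝ} (ht : t ∈ Set.Icc (0 : ℝ) 1)
    (ht' : t' ∈ Set.Icc (0 : ℝ) 1) :
    PrePoint.Same (edgePrePoint R g a t) (edgePrePoint R g a t') |t - t'| := by
  obtain ⟨s, b⟩ := a
  cases b
  · refine ⟨_, _, _, _, rfl, rfl, ?_⟩
    simp only [Set.projIcc_of_mem zero_le_one ht, Set.projIcc_of_mem zero_le_one ht',
      unitInterval.coe_symm_eq]
    rw [abs_sub_comm]
    congr 1
    ring
  · refine ⟨_, _, _, _, rfl, rfl, ?_⟩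
    simp only [Set.projIcc_of_mem zero_le_one ht, Set.projIcc_of_mem zero_le_one ht']

theorem Same.eq_abs_off {x y : PrePoint R} {c : ℝ} (h : PrePoint.Same x y c) (i : Bool) :
    c = |x.off i - y.off i| := by
  obtain ⟨g, s, t, t', rfl, rfl, rfl⟩ := h
  cases i
  · rfl
  · simp only [PrePoint.off]
    rw [abs_sub_comm]
    congr 1
    ring

theorem edgePrePoint_label {g h : PGroup R} {a : S × Bool} {t : ℝ} {s : S} {u : unitInterval}
    (e : edgePrePoint R g a t = PrePoint.edge h s u) : a.1 = s := by
  unfold edgePrePoint at e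
  split_ifs at e
  · injection e
  · injection e

theorem Same.fst_eq {g g' : PGroup R} {a a' : S × Bool} {t t' c : ℝ}
    (h : PrePoint.Same (edgePrePoint R g a t) (edgePrePoint R g' a' t') c) : a.1 = a'.1 := by
  obtain ⟨_, _, _, _, h1, h2, -⟩ := h
  rw [edgePrePoint_label h1, edgePrePoint_label h2]

theorem edgePath_append (g : PGroup R) {w : Word S} (v : Word S) (hw : w ≠ []) {t : ℝ}
    (ht : t ≤ w.length) : edgePath R g (w ++ v) t = edgePath R g w t := by
  induction w generalizing g t with
  | nil => exact (hw rfl).elim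
  | cons a w ih =>
    rw [List.cons_append, edgePath, edgePath]
    split_ifs with h
    · rfl
    · push_cast [List.length_cons] at ht
      refine ih _ ?_ (by linarith)
      rintro rfl
      simp at ht
      exact h ht

theorem edgePath_eq_edgePoint (g : PGroup R) {w : Word S} (hw : w ≠ []) {t : ℝ} (h0 : 0 ≤ t)
    (ht : t ≤ w.length) : ∃ k, ∃ hk : k < w.length, (k : ℝ) ≤ t ∧ t ≤ k + 1 ∧
      edgePath R g w t =
        SeparationQuotient.mk (edgePrePoint R (g * evalWord R (w.take k)) w[k] (t - k)) := by
  induction w generalizing g t with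
  | nil => exact (hw rfl).elim
  | cons a w ih =>
    rw [edgePath]
    split_ifs with h
    · refine ⟨0, by simp, by simpa using h0, by simpa using h, ?_⟩
      have h1 : evalWord R ([] : Word S) = 1 := rfl
      simp [edgePoint_eq, h1]
    · push_cast [List.length_cons] at ht
      have hw' : w ≠ [] := by
        rintro rfl
        simp at ht
        exact h ht
      obtain ⟨k, hk, h1, h2, h3⟩ := ih (g * evalWord R [a]) hw' (t := t - 1) (by linarith)
        (by linarith)
      refine ⟨k + 1, by simpa using hk, by push_cast; linarith, by push_cast; linarith, ?_⟩
      rw [h3, mul_assoc, ← evalWord_append]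
      simp only [List.singleton_append, List.take_succ_cons, List.getElem_cons_succ]
      push_cast
      rw [show t - 1 - (k : ℝ) = t - (k + 1) by ring]

/-! ### Relator cycles are isometrically embedded in the Cayley graph -/

theorem wordDist_take_le (g : PGroup R) (r : Word S) {i j : ℕ} (hij : i ≤ j) :
    wordDist R (g * evalWord R (r.take i)) (g * evalWord R (r.take j)) ≤ j - i := by
  refine (wordDist_le ((r.drop i).take (j - i)) ?_).trans (List.length_take_le _ _)
  rw [mul_assoc, ← evalWord_append, ← List.take_add, Nat.add_sub_cancel' hij]

theorem evalWord_take_succ (g : PGroup R) (r : Word S) {k : ℕ} (hk : k < r.length) :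
    g * evalWord R (r.take k) * evalWord R [r[k]] = g * evalWord R (r.take (k + 1)) := by
  rw [mul_assoc, ← evalWord_append, List.take_concat_get' r k hk]

theorem min_le_wordDist_take (hR : SmallCancellation (1 / 6) R) {r : Word S}
    (hr : r ∈ relators R) (g : PGroup R) {i j : ℕ} (hi : i ≤ r.length) (hj : j ≤ r.length) :
    min |(i : ℝ) - j| (r.length - |(i : ℝ) - j|) ≤
      (wordDist R (g * evalWord R (r.take i)) (g * evalWord R (r.take j)) : ℝ) := by
  have key : ∀ i j : ℕ, i ≤ j → j ≤ r.length → min |(i : ℝ) - j| (r.length - |(i : ℝ) - j|) ≤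
      (wordDist R (g * evalWord R (r.take i)) (g * evalWord R (r.take j)) : ℝ) := by
    intro i j hij hj
    have h := le_wordDist_take hR hr g hij hj
    have h1 : |(i : ℝ) - j| = ((j - i : ℕ) : ℝ) := by
      rw [abs_sub_comm, Nat.cast_sub hij, abs_of_nonneg]
      exact sub_nonneg.2 (by exact_mod_cast hij)
    rw [h1, ← Nat.cast_sub (by omega : j - i ≤ r.length)]
    exact_mod_cast h
  rcases le_total i j with hij | hij
  · exact key i j hij hj
  · rw [abs_sub_comm, wordDist_comm]
    exact key j i hij hi

theorem take_injective (hR : SmallCancellation (1 / 6) R) {r : Word S}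
    (hr : r ∈ relators R) {g : PGroup R} {i j : ℕ} (hi : i ≤ r.length) (hj : j ≤ r.length)
    (h : g * evalWord R (r.take i) = g * evalWord R (r.take j)) :
    i = j ∨ (i = 0 ∧ j = r.length) ∨ (i = r.length ∧ j = 0) := by
  rcases le_total i j with hij | hij
  · have h1 := le_wordDist_take hR hr g hij hj
    rw [h, wordDist_self] at h1
    omega
  · have h1 := le_wordDist_take hR hr g hij hi
    rw [h, wordDist_self] at h1
    omega

theorem dist_edgePath_le (g : PGroup R) {w : Word S} (hw : w ≠ []) {s t : ℝ} (hs : 0 ≤ s)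
    (hst : s ≤ t) (ht : t ≤ w.length) :
    dist (edgePath R g w s) (edgePath R g w t) ≤ t - s := by
  obtain ⟨k, hk, k1, k2, hks⟩ := edgePath_eq_edgePoint g hw hs (hst.trans ht)
  obtain ⟨l, hl, l1, l2, hlt⟩ := edgePath_eq_edgePoint g hw (hs.trans hst) ht
  rcases lt_trichotomy k l with hkl | rfl | hkl
  · rw [hks, hlt, SeparationQuotient.dist_mk]
    refine (PrePoint.pdist_le_via _ _ w[k].2 (!w[l].2)).trans ?_
    unfold PrePoint.via
    rw [edgePrePoint_vert_target, edgePrePoint_vert_source, evalWord_take_succ g w hk,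
      edgePrePoint_off_target _ _ (by linarith) (by linarith),
      edgePrePoint_off_source _ _ (by linarith) (by linarith)]
    have h1 : (wordDist R (g * evalWord R (w.take (k + 1))) (g * evalWord R (w.take l)) : ℝ) ≤
        ((l - (k + 1) : ℕ) : ℝ) := by exact_mod_cast wordDist_take_le g w hkl
    rw [Nat.cast_sub (Nat.succ_le_of_lt hkl)] at h1
    push_cast at h1
    linarith
  · rw [hks, hlt, SeparationQuotient.dist_mk]
    refine (PrePoint.pdist_le_same (same_edgePrePoint _ _ ?_ ?_)).trans ?_
    · constructor <;> linarith
    · constructor <;> linarith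
    · rw [abs_sub_comm, abs_of_nonneg] <;> linarith
  · have h1 : (l : ℝ) + 1 ≤ k := by exact_mod_cast hkl
    obtain rfl : s = t := by linarith
    simp

theorem edgePath_relator_closed {r : Word S} (hr : r ∈ relators R) (g : PGroup R) :
    edgePath R g r r.length = edgePath R g r 0 := by
  obtain ⟨k, hk, k1, k2, hks⟩ := edgePath_eq_edgePoint g hr.2 le_rfl (Nat.cast_nonneg r.length)
  obtain ⟨l, hl, l1, l2, hlt⟩ :=
    edgePath_eq_edgePoint g hr.2 (Nat.cast_nonneg r.length) (le_refl (r.length : ℝ))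
  obtain rfl : k = 0 := by
    have : k ≤ 0 := by exact_mod_cast k1
    omega
  have hl' : l + 1 = r.length := by
    have : r.length ≤ l + 1 := by exact_mod_cast l2
    omega
  have hl2 : (l : ℝ) + 1 = r.length := by exact_mod_cast hl'
  apply dist_le_zero.1
  rw [hks, hlt, SeparationQuotient.dist_mk]
  refine (PrePoint.pdist_le_via _ _ r[l].2 (!r[0].2)).trans ?_
  unfold PrePoint.via
  rw [edgePrePoint_vert_target, edgePrePoint_vert_source, evalWord_take_succ g r hl,
    edgePrePoint_off_target _ _ (by linarith) (by linarith),
    edgePrePoint_off_source _ _ (by simp) (by simp), hl', List.take_length, List.take_zero,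
    evalWord_relator hr]
  have h1 : evalWord R ([] : Word S) = 1 := rfl
  rw [h1, wordDist_self]
  simp only [Nat.cast_zero]
  linarith

theorem le_dist_edgePath (hR : SmallCancellation (1 / 6) R) {r : Word S} (hr : r ∈ relators R)
    (g : PGroup R) {s t : ℝ} (hs : s ∈ Set.Icc (0 : ℝ) r.length)
    (ht : t ∈ Set.Icc (0 : ℝ) r.length) :
    min |s - t| (r.length - |s - t|) ≤ dist (edgePath R g r s) (edgePath R g r t) := by
  obtain ⟨k, hk, k1, k2, hks⟩ := edgePath_eq_edgePoint g hr.2 hs.1 hs.2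
  obtain ⟨l, hl, l1, l2, hlt⟩ := edgePath_eq_edgePoint g hr.2 ht.1 ht.2
  rw [hks, hlt, SeparationQuotient.dist_mk]
  have ends : ∀ (s : ℝ) (k : ℕ) (hk : k < r.length), (k : ℝ) ≤ s → s ≤ k + 1 → ∀ i : Bool,
      ∃ k' ≤ r.length,
        (edgePrePoint R (g * evalWord R (r.take k)) r[k] (s - k)).vert i =
          g * evalWord R (r.take k') ∧
        (edgePrePoint R (g * evalWord R (r.take k)) r[k] (s - k)).off i = |s - k'| := by
    intro s k hk h1 h2 i
    rcases Bool.eq_or_eq_not i r[k].2 with rfl | rfl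
    · refine ⟨k + 1, hk, ?_, ?_⟩
      · rw [edgePrePoint_vert_target, evalWord_take_succ g r hk]
      · rw [edgePrePoint_off_target _ _ (by linarith) (by linarith), abs_sub_comm, abs_of_nonneg]
        · push_cast; ring
        · push_cast; linarith
    · refine ⟨k, hk.le, edgePrePoint_vert_source _ _ _, ?_⟩
      rw [edgePrePoint_off_source _ _ (by linarith) (by linarith), abs_of_nonneg (by linarith)]
  rcases PrePoint.pdist_cases (edgePrePoint R (g * evalWord R (r.take k)) r[k] (s - k))
    (edgePrePoint R (g * evalWord R (r.take l)) r[l] (t - l)) with ⟨i, j, h⟩ | h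
  · refine le_of_le_of_eq ?_ h.symm
    obtain ⟨k', hk', e1, e2⟩ := ends s k hk k1 k2 i
    obtain ⟨l', hl', e3, e4⟩ := ends t l hl l1 l2 j
    unfold PrePoint.via
    rw [e1, e2, e3, e4]
    have hW := min_le_wordDist_take hR hr g hk' hl'
    have t1 := abs_sub_le s k' t
    have t2 := abs_sub_le (k' : ℝ) l' t
    have t3 := abs_sub_le (k' : ℝ) s l'
    have t4 := abs_sub_le s t l'
    rw [abs_sub_comm (k' : ℝ) s] at t3
    rw [abs_sub_comm (l' : ℝ) t] at t2
    rcases min_le_iff.1 hW with hW | hW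
    · exact (min_le_left _ _).trans (by linarith)
    · exact (min_le_right _ _).trans (by linarith)
  · refine le_trans (min_le_left _ _) (le_of_eq_of_le ?_ (le_refl (PrePoint.pdist _ _)))
    have hv := h.vert_eq
    have hfst := Same.fst_eq h
    rcases Bool.eq_or_eq_not r[k].2 r[l].2 with hb | hb
    · have h1 := hv (!r[k].2)
      rw [edgePrePoint_vert_source, hb, edgePrePoint_vert_source] at h1
      obtain rfl : k = l := by
        have := take_injective hR hr hk.le hl.le h1
        omega
      rw [Same.eq_abs_off h (!r[k].2), edgePrePoint_off_source _ _ (by linarith) (by linarith),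
        edgePrePoint_off_source _ _ (by linarith) (by linarith)]
      congr 1
      ring
    · exfalso
      have h1 := hv (!r[k].2)
      have h2 := hv (r[k].2)
      rw [edgePrePoint_vert_source, hb, Bool.not_not, edgePrePoint_vert_target,
        evalWord_take_succ g r hl] at h1
      rw [edgePrePoint_vert_target, hb, edgePrePoint_vert_source,
        evalWord_take_succ g r hk] at h2
      have c1 := take_injective hR hr hk.le hl h1
      have c2 := take_injective hR hr hk hl.le h2
      have hred := (isSymmSmall_relators hR).reduced r hr
      have hkl : r[k] = letterInv r[l] := Prod.ext hfst hb
      have hlk : r[l] = letterInv r[k] := by rw [hkl, letterInv_letterInv]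
      have hc : k = l ∨ k = l + 1 ∨ l = k + 1 := by omega
      rcases hc with rfl | rfl | rfl
      · simp at hb
      · exact IsReduced.getElem?_succ_ne hred (List.getElem?_eq_getElem hl)
          (List.getElem?_eq_getElem hk) hkl
      · exact IsReduced.getElem?_succ_ne hred (List.getElem?_eq_getElem hk)
          (List.getElem?_eq_getElem hl) hlk

/-- The part of a relator cycle outside an initial part of relative length `1 / N`, traversed
backwards, is an `N`-quasi-geodesic. -/
theorem isQuasiGeodesicOn_complement (hR : SmallCancellation (1 / 6) R) {r : Word S}
    (hr : r ∈ relators R) (g : PGroup R) {N : ℝ} (hN : 1 ≤ N) :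
    IsQuasiGeodesicOn N (Set.Icc 0 (r.length - r.length / N : ℝ))
      (fun τ => edgePath R g r (r.length - τ)) := by
  set n : ℝ := (r.length : ℝ) with hn
  have n0 : 0 ≤ n := Nat.cast_nonneg _
  have hN0 : 0 < N := by linarith
  have hnN : 0 ≤ n / N := by positivity
  have hmem : ∀ τ ∈ Set.Icc 0 (n - n / N), n - τ ∈ Set.Icc 0 n := fun τ hτ =>
    ⟨by linarith [hτ.2], by linarith [hτ.1]⟩
  have hup : ∀ s ∈ Set.Icc 0 (n - n / N), ∀ t ∈ Set.Icc 0 (n - n / N),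
      dist (edgePath R g r (n - s)) (edgePath R g r (n - t)) ≤ |t - s| := by
    intro s hs t ht
    rcases le_total s t with hst | hst
    · rw [dist_comm, abs_of_nonneg (by linarith)]
      have := dist_edgePath_le g hr.2 (hmem t ht).1 (by linarith : n - t ≤ n - s) (hmem s hs).2
      linarith
    · rw [abs_sub_comm, abs_of_nonneg (by linarith)]
      have := dist_edgePath_le g hr.2 (hmem s hs).1 (by linarith : n - s ≤ n - t) (hmem t ht).2
      linarith
  constructor
  · refine LipschitzOnWith.continuousOn (K := 1) (LipschitzOnWith.of_dist_le_mul ?_)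
    intro s hs t ht
    rw [NNReal.coe_one, one_mul, dist_comm s t, Real.dist_eq]
    exact hup s hs t ht
  · intro s hs t ht
    have h0 := abs_nonneg (t - s)
    constructor
    · have h1 := le_dist_edgePath hR hr g (hmem s hs) (hmem t ht)
      rw [show n - s - (n - t) = t - s by ring] at h1
      refine le_trans ?_ h1
      have h2 : |t - s| ≤ n - n / N := by
        rw [abs_le]
        constructor <;> linarith [hs.1, hs.2, ht.1, ht.2]
      have h3 : |t - s| / N ≤ |t - s| := div_le_self h0 hN
      have h4 : |t - s| / N ≤ n / N := by gcongr; linarith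
      exact le_min (by linarith) (by linarith)
    · have h1 := hup s hs t ht
      nlinarith

end Geometry
end MorseSC

open MorseSC in
/-- In a `C'(1/6)` group, a relator of which an `M`-Morse subword makes up at least the fraction
`1 / N` has length at most `D = (2N / (N - 1)) M(N)`. -/
theorem stmt6 {S : Type*} [Finite S] (R : Set (Word S)) (hR : SmallCancellation (1 / 6) R)
    (M : ℝ → ℝ) (hM : IsMorseGauge M) (N : ℕ) (hN : 2 ≤ N) :
    ∃ D : ℝ, D = 2 * (N : ℝ) / ((N : ℝ) - 1) * M (N : ℝ) ∧
      ∀ r ∈ R, ∀ w : Word S, w <:+: r → (r.length : ℝ) / (N : ℝ) ≤ (w.length : ℝ) →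
        (∃ g : PGroup R,
          IsMorseQuasiGeodesicOn M (Set.Icc 0 (w.length : ℝ)) (edgePath R g w)) →
        (r.length : ℝ) ≤ D := by
  refine ⟨_, rfl, ?_⟩
  rintro r hr w ⟨u, v, huv⟩ hw ⟨g, -, hmorse⟩
  have hN' : (2 : ℝ) ≤ N := by exact_mod_cast hN
  have hN0 : (0 : ℝ) < N := by linarith
  have hM0 : 0 ≤ M N := hM.2.2 N (by linarith)
  rcases eq_or_ne r [] with rfl | hne
  · simp only [List.length_nil, Nat.cast_zero]
    exact mul_nonneg (div_nonneg (by linarith) (by linarith)) hM0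
  set ρ := w ++ (v ++ u) with hρ
  have hrot : r ~r ρ := by
    rw [← huv, hρ, List.append_assoc, ← List.append_assoc w]
    exact List.isRotated_append
  have hlen : ρ.length = r.length := hrot.perm.length_eq.symm
  have n0 : (0 : ℝ) < r.length := by exact_mod_cast List.length_pos_iff.2 hne
  have hρC : ρ ∈ relators R := by
    refine ⟨⟨r, hr, Or.inl hrot⟩, fun h => hne ?_⟩
    rw [← List.length_eq_zero_iff, ← hlen, h, List.length_nil]
  set n : ℝ := (r.length : ℝ) with hn
  have hnN : 0 < n / N := by positivity
  have hwne : w ≠ [] := by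
    rintro rfl
    simp only [List.length_nil, Nat.cast_zero] at hw
    linarith
  have hpath : ∀ t : ℝ, t ≤ n / N → edgePath R g w t = edgePath R g ρ t := fun t ht =>
    (edgePath_append g _ hwne (ht.trans hw)).symm
  have hnN' : n / N ≤ n := div_le_self n0.le (by linarith)
  have hqg := isQuasiGeodesicOn_complement hR hρC g (N := N) (by linarith)
  rw [hlen, ← hn] at hqg
  have hsub := hmorse N (by linarith) 0 ⟨le_rfl, hnN.le.trans hw⟩ (n / N) ⟨hnN.le, hw⟩ hnN.le
    _ 0 (n - n / N) (by linarith) hqg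
    (by rw [hpath 0 hnN.le, sub_zero, hn, ← hlen, edgePath_relator_closed hρC])
    (by rw [hpath _ le_rfl, sub_sub_cancel])
  set b := n - n / N with hb
  have hmid := hsub ⟨b / 2, ⟨by linarith, by linarith⟩, rfl⟩
  rw [Metric.mem_cthickening_iff] at hmid
  have hfar : ENNReal.ofReal (b / 2) ≤
      Metric.infEDist (edgePath R g ρ (n - b / 2)) (edgePath R g w '' Set.Icc 0 (n / N)) := by
    rw [Metric.le_infEDist]
    rintro _ ⟨t, ht, rfl⟩
    rw [edist_dist, hpath t ht.2]
    apply ENNReal.ofReal_le_ofReal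
    have h1 := le_dist_edgePath hR hρC g (s := n - b / 2) (t := t)
      (by rw [hlen, ← hn]; constructor <;> linarith)
      (by rw [hlen, ← hn]; exact ⟨ht.1, ht.2.trans hnN'⟩)
    refine le_trans ?_ h1
    rw [hlen, ← hn, abs_of_nonneg (by linarith [ht.2])]
    exact le_min (by linarith [ht.2]) (by linarith [ht.1])
  have hle : b / 2 ≤ M N := (ENNReal.ofReal_le_ofReal_iff hM0).1 (hfar.trans hmid)
  rw [div_mul_eq_mul_div, le_div_iff₀ (by linarith)]
  have h1 : n / N * N = n := div_mul_cancel₀ n hN0.ne'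
  nlinarith
end

section
/- Terminology. A Morse gauge is a non-decreasing continuous function $M:[1,\infty)\to[0,\infty)$. For $Q\ge 1$, a $Q$-quasi-geodesic in a metric space $X$ is a continuous map $\gamma:I\to X$ on an interval $I\subseteq\mathbb R$ with $\frac{|t-s|}{Q}-Q\le d(\gamma(s),\gamma(t))\le Q|t-s|+Q$ for all $s,t\in I$. A quasi-geodesic $\gamma$ is $M$-Morse if for every $q\ge 1$ and all $s\le t$ in its domain, every $q$-quasi-geodesic with endpoints $\gamma(s)$ and $\gamma(t)$ is contained in the closed $M(q)$-neighbourhood of $\gamma[s,t]$; it is $L$-locally $M$-Morse if every subpath $\gamma[s,t]$ with $|t-s|\le L$ is $M$-Morse. Statement. Let $X$ be a geodesic metric space, $M$ a Morse gauge and $Q\ge 1$ a constant. There exists a Morse gauge $M'$ such that for every scale $L'\ge 0$ there exists a scale $L\ge 0$ with the following property: if $\gamma:I\to X$ is a (global) $Q$-quasi-geodesic which is $L$-locally $M$-Morse, and $\gamma':I'\to X$ is a $Q$-quasi-geodesic contained in the closed $Q$-neighbourhood of $\gamma(I)$, then $\gamma'$ is $L'$-locally $M'$-Morse. -/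
namespace MorseLTG

/-- A Morse gauge: a non-decreasing continuous function `[1, ∞) → [0, ∞)`
(only the values on `[1, ∞)` matter). -/
def IsMorseGauge (M : ℝ → ℝ) : Prop :=
  MonotoneOn M (Set.Ici 1) ∧ ContinuousOn M (Set.Ici 1) ∧ ∀ t : ℝ, 1 ≤ t → 0 ≤ M t

section Space

variable {X : Type*} [MetricSpace X]

/-- The restriction of `γ` to `I ⊆ ℝ` is a (continuous) `Q`-quasi-geodesic. -/
def QGeoOn (Q : ℝ) (I : Set ℝ) (γ : ℝ → X) : Prop :=
  ContinuousOn γ I ∧ ∀ s ∈ I, ∀ t ∈ I,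
    |t - s| / Q - Q ≤ dist (γ s) (γ t) ∧ dist (γ s) (γ t) ≤ Q * |t - s| + Q

/-- `γ` is `M`-Morse on `I`: for every `Q ≥ 1` and all `s ≤ t` in `I`, every `Q`-quasi-geodesic
from `γ s` to `γ t` is contained in the closed `M Q`-neighbourhood of `γ[s, t]`. -/
def MorseOn (M : ℝ → ℝ) (I : Set ℝ) (γ : ℝ → X) : Prop :=
  ∀ Q : ℝ, 1 ≤ Q → ∀ s ∈ I, ∀ t ∈ I, s ≤ t →
    ∀ (lam : ℝ → X) (a b : ℝ), a ≤ b → QGeoOn Q (Set.Icc a b) lam →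
      lam a = γ s → lam b = γ t →
      lam '' Set.Icc a b ⊆ Metric.cthickening (M Q) (γ '' Set.Icc s t)

/-- `p` is `L`-locally `M`-Morse on `I`: every subpath `p[s, t]` with `|t - s| ≤ L` is `M`-Morse. -/
def LocMorseOn (M : ℝ → ℝ) (L : ℝ) (I : Set ℝ) (p : ℝ → X) : Prop :=
  ∀ s ∈ I, ∀ t ∈ I, s ≤ t → t - s ≤ L → MorseOn M (Set.Icc s t) p

/-- `γ` is a geodesic on `I` (an isometric embedding). -/
def GeodesicOn (I : Set ℝ) (γ : ℝ → X) : Prop :=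
  ∀ s ∈ I, ∀ t ∈ I, dist (γ s) (γ t) = |t - s|

end Space

/-- `X` is a geodesic metric space. -/
def GeodesicSpace (X : Type*) [MetricSpace X] : Prop :=
  ∀ x y : X, ∃ γ : ℝ → X, γ 0 = x ∧ γ (dist x y) = y ∧
    GeodesicOn (Set.Icc 0 (dist x y)) γ

end MorseLTG

namespace MorseLTG

section Lemmas

variable {X : Type*} [MetricSpace X]

/-- The quasi-geodesic inequalities only need to be checked for ordered pairs. -/
lemma QGeoOn.of_le {Q : ℝ} {I : Set ℝ} {γ : ℝ → X} (hc : ContinuousOn γ I)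
    (h : ∀ s ∈ I, ∀ t ∈ I, s ≤ t →
      (t - s) / Q - Q ≤ dist (γ s) (γ t) ∧ dist (γ s) (γ t) ≤ Q * (t - s) + Q) :
    QGeoOn Q I γ := by
  refine ⟨hc, fun s hs t ht => ?_⟩
  rcases le_total s t with hst | hst
  · rw [abs_of_nonneg (sub_nonneg.2 hst)]
    exact h s hs t ht hst
  · rw [abs_sub_comm, abs_of_nonneg (sub_nonneg.2 hst), dist_comm]
    exact h t ht s hs hst

lemma QGeoOn.mono {Q : ℝ} {I J : Set ℝ} {γ : ℝ → X} (h : QGeoOn Q I γ) (hJ : J ⊆ I) :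
    QGeoOn Q J γ :=
  ⟨h.1.mono hJ, fun s hs t ht => h.2 s (hJ hs) t (hJ ht)⟩

lemma QGeoOn.comp_neg {Q a b : ℝ} {γ : ℝ → X} (h : QGeoOn Q (Set.Icc a b) γ) :
    QGeoOn Q (Set.Icc (-b) (-a)) (fun t => γ (-t)) := by
  have hmem : ∀ t ∈ Set.Icc (-b) (-a), -t ∈ Set.Icc a b := fun t ht =>
    ⟨by linarith [ht.2], by linarith [ht.1]⟩
  refine ⟨h.1.comp continuous_neg.continuousOn hmem, fun s hs t ht => ?_⟩
  have := h.2 (-s) (hmem s hs) (-t) (hmem t ht)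
  rwa [neg_sub_neg, abs_sub_comm s t] at this

/-- The parameter distance in a quasi-geodesic is controlled by the distance in the space. -/
lemma QGeoOn.abs_sub_le {Q : ℝ} (hQ : 1 ≤ Q) {I : Set ℝ} {γ : ℝ → X} (h : QGeoOn Q I γ)
    {s t D : ℝ} (hs : s ∈ I) (ht : t ∈ I) (hD : dist (γ s) (γ t) ≤ D) :
    |t - s| ≤ Q * (D + Q) := by
  have h1 := (h.2 s hs t ht).1
  have h2 : |t - s| / Q ≤ D + Q := by linarith
  rw [div_le_iff₀ (by linarith)] at h2
  linarith

/-- Appending a geodesic of length at most `C` at the end of a quasi-geodesic. -/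
lemma QGeoOn.exists_append (hX : GeodesicSpace X) {q C a b : ℝ} (hq : 1 ≤ q) (hab : a ≤ b)
    {lam : ℝ → X} (h : QGeoOn q (Set.Icc a b) lam) {y : X} (hy : dist (lam b) y ≤ C) :
    ∃ (mu : ℝ → X) (b' : ℝ), b ≤ b' ∧ QGeoOn (q + 2 * C) (Set.Icc a b') mu ∧
      Set.EqOn mu lam (Set.Icc a b) ∧ mu b' = y ∧
      ∀ t ∈ Set.Icc b b', dist (mu t) (lam b) ≤ C := by
  obtain ⟨g, hg0, hg1, hg⟩ := hX (lam b) y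
  set d := dist (lam b) y with hd
  have hd0 : 0 ≤ d := dist_nonneg
  have hC : 0 ≤ C := hd0.trans hy
  let mu : ℝ → X := fun t => if t ≤ b then lam t else g (t - b)
  have hmu1 : ∀ t, t ≤ b → mu t = lam t := fun t ht => if_pos ht
  have hmu2 : ∀ t, b ≤ t → mu t = g (t - b) := by
    intro t ht
    rcases ht.eq_or_lt with rfl | ht
    · rw [hmu1 b le_rfl, sub_self, hg0]
    · exact if_neg (not_le.2 ht)
  have hmem : ∀ t ∈ Set.Icc b (b + d), t - b ∈ Set.Icc 0 d := fun t ht =>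
    ⟨by linarith [ht.1], by linarith [ht.2]⟩
  have hgd : ∀ t ∈ Set.Icc b (b + d), dist (lam b) (mu t) = t - b := by
    intro t ht
    rw [hmu2 t ht.1, ← hg0, hg 0 ⟨le_rfl, hd0⟩ _ (hmem t ht), sub_zero,
      abs_of_nonneg (hmem t ht).1]
  have hgc : ContinuousOn g (Set.Icc 0 d) := by
    refine (LipschitzOnWith.of_dist_le_mul (K := 1) fun s hs t ht => ?_).continuousOn
    rw [hg s hs t ht, NNReal.coe_one, one_mul, Real.dist_eq, abs_sub_comm]
  have hmuc : ContinuousOn mu (Set.Icc a (b + d)) := by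
    rw [← Set.Icc_union_Icc_eq_Icc hab (by linarith : b ≤ b + d)]
    refine ContinuousOn.union_of_isClosed ?_ ?_ isClosed_Icc isClosed_Icc
    · exact h.1.congr fun t ht => hmu1 t ht.2
    · exact (hgc.comp (continuous_id.sub continuous_const).continuousOn hmem).congr
        fun t ht => hmu2 t ht.1
  have hq' : 0 < q := by linarith
  have hqq : q ≤ q + 2 * C := by linarith
  have hdiv : ∀ x, 0 ≤ x → x / (q + 2 * C) ≤ x / q := fun x hx =>
    div_le_div_of_nonneg_left hx hq' hqq
  have hmul : ∀ x, 0 ≤ x → q * x ≤ (q + 2 * C) * x := fun x hx =>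
    mul_le_mul_of_nonneg_right hqq hx
  have hdiv1 : ∀ x, 0 ≤ x → x / q ≤ x := fun x hx => div_le_self hx hq
  have hmul1 : ∀ x, 0 ≤ x → x ≤ q * x := fun x hx => le_mul_of_one_le_left hx hq
  refine ⟨mu, b + d, by linarith, QGeoOn.of_le hmuc ?_, fun t ht => hmu1 t ht.2, ?_, ?_⟩
  · intro s hs t ht hst
    have h0 : 0 ≤ t - s := by linarith
    have e1 := hdiv _ h0
    have e2 := hmul _ h0
    rcases le_total t b with htb | htb
    · rw [hmu1 s (hst.trans htb), hmu1 t htb]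
      have := h.2 s ⟨hs.1, hst.trans htb⟩ t ⟨ht.1, htb⟩
      rw [abs_of_nonneg h0] at this
      constructor <;> linarith [this.1, this.2]
    · rcases le_total s b with hsb | hsb
      · have h1 := h.2 s ⟨hs.1, hsb⟩ b ⟨hab, le_rfl⟩
        rw [abs_of_nonneg (sub_nonneg.2 hsb)] at h1
        have h2 := hgd t ⟨htb, ht.2⟩
        rw [hmu1 s hsb]
        have h3 := dist_triangle (lam s) (lam b) (mu t)
        have h4 := dist_triangle_right (lam s) (lam b) (mu t)
        have h5 := hdiv1 (t - b) (by linarith)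
        have h6 : (t - s) / q = (b - s) / q + (t - b) / q := by ring
        have h7 : q * (t - s) = q * (b - s) + q * (t - b) := by ring
        have h8 := hmul1 (t - b) (by linarith)
        have h9 : t - b ≤ C := by linarith [ht.2]
        constructor <;> linarith [h1.1, h1.2]
      · have : dist (mu s) (mu t) = t - s := by
          rw [hmu2 s hsb, hmu2 t htb, hg _ (hmem s ⟨hsb, hs.2⟩) _ (hmem t ⟨htb, ht.2⟩),
            sub_sub_sub_cancel_right, abs_of_nonneg h0]
        rw [this]
        constructor <;> linarith [hdiv1 _ h0, hmul1 _ h0]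
  · rw [hmu2 _ (by linarith), add_sub_cancel_left, hg1]
  · intro t ht
    rw [dist_comm, hgd t ht]
    linarith [ht.2]

/-- Moving both endpoints of a quasi-geodesic by at most `C`. -/
lemma QGeoOn.exists_extend (hX : GeodesicSpace X) {q C a b : ℝ} (hq : 1 ≤ q) (hab : a ≤ b)
    {lam : ℝ → X} (h : QGeoOn q (Set.Icc a b) lam) {x y : X} (hx : dist (lam a) x ≤ C)
    (hy : dist (lam b) y ≤ C) :
    ∃ (mu : ℝ → X) (a' b' : ℝ), a' ≤ a ∧ b ≤ b' ∧ QGeoOn (q + 4 * C) (Set.Icc a' b') mu ∧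
      Set.EqOn mu lam (Set.Icc a b) ∧ mu a' = x ∧ mu b' = y ∧
      ∀ t ∈ Set.Icc a' b', ∃ s ∈ Set.Icc a b, dist (mu t) (lam s) ≤ C := by
  have hC : 0 ≤ C := dist_nonneg.trans hx
  obtain ⟨mu, b', hb, hmu, heq, hmub, hclose⟩ := h.exists_append hX hq hab hy
  have hmua : mu a = lam a := heq ⟨le_rfl, hab⟩
  have hx' : dist ((fun t => mu (-t)) (-a)) x ≤ C := by simpa [hmua] using hx
  obtain ⟨nu, c, hc, hnu, heq', hnuc, hclose'⟩ :=
    hmu.comp_neg.exists_append hX (by linarith) (by linarith) hx'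
  simp only [neg_neg, hmua] at hclose'
  have heq'' : ∀ t ∈ Set.Icc a b', nu (-t) = mu t := by
    intro t ht
    have := heq' (x := -t) ⟨by linarith [ht.2], by linarith [ht.1]⟩
    simpa using this
  have hfin := hnu.comp_neg
  rw [neg_neg] at hfin
  refine ⟨fun t => nu (-t), -c, b', by linarith, hb, ?_, ?_, ?_, ?_, ?_⟩
  · convert hfin using 1
    ring
  · intro t ht
    rw [← heq ht]
    exact heq'' t ⟨ht.1, ht.2.trans hb⟩
  · simpa using hnuc
  · exact (heq'' b' ⟨hab.trans hb, le_rfl⟩).trans hmub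
  · intro t ht
    rcases le_total t a with hta | hta
    · exact ⟨a, ⟨le_rfl, hab⟩, hclose' (-t) ⟨by linarith, by linarith [ht.1]⟩⟩
    · dsimp only
      rw [heq'' t ⟨hta, ht.2⟩]
      rcases le_total t b with htb | htb
      · exact ⟨t, ⟨hta, htb⟩, by rwa [heq ⟨hta, htb⟩, dist_self]⟩
      · exact ⟨b, ⟨hab, le_rfl⟩, hclose t ⟨htb, ht.2⟩⟩

/-- A connected set through the endpoints of a quasi-geodesic and close to it comes close to each
of its points. -/
lemma QGeoOn.exists_dist_le_of_isPreconnected {Q R u v : ℝ} (hQ : 1 ≤ Q) {η : ℝ → X}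
    (h : QGeoOn Q (Set.uIcc u v) η) (hR : 0 ≤ R) {S : Set X} (hS : IsPreconnected S)
    (hu : η u ∈ S) (hv : η v ∈ S)
    (hsub : S ⊆ Metric.cthickening R (η '' Set.uIcc u v)) {x : ℝ} (hx : x ∈ Set.uIcc u v) :
    ∃ p ∈ S, dist (η x) p ≤ Q * (Q * (2 * R + Q)) + Q + R := by
  wlog huv : u ≤ v generalizing u v
  · rw [Set.uIcc_comm] at h hsub hx
    exact this h hv hu hsub hx (le_of_not_ge huv)
  rw [Set.uIcc_of_le huv] at h hsub hx
  have hl : Set.Icc u x ⊆ Set.Icc u v := Set.Icc_subset_Icc_right hx.2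
  have hr : Set.Icc x v ⊆ Set.Icc u v := Set.Icc_subset_Icc_left hx.1
  have compact_image : ∀ {c d : ℝ}, Set.Icc c d ⊆ Set.Icc u v →
      IsCompact (η '' Set.Icc c d) := fun hcd => isCompact_Icc.image_of_continuousOn (h.1.mono hcd)
  have exists_near : ∀ {c d : ℝ}, Set.Icc c d ⊆ Set.Icc u v → ∀ {p},
      p ∈ Metric.cthickening R (η '' Set.Icc c d) → ∃ w ∈ Set.Icc c d, dist p (η w) ≤ R := by
    intro c d hcd p hp
    rw [(compact_image hcd).cthickening_eq_biUnion_closedBall hR] at hp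
    simpa using hp
  have hcover : S ⊆ Metric.cthickening R (η '' Set.Icc u x) ∪
      Metric.cthickening R (η '' Set.Icc x v) := by
    intro p hp
    obtain ⟨w, hw, hpw⟩ := exists_near subset_rfl (hsub hp)
    rcases le_total w x with hwx | hwx
    · exact Or.inl (Metric.mem_cthickening_of_dist_le _ (η w) _ _ ⟨w, ⟨hw.1, hwx⟩, rfl⟩ hpw)
    · exact Or.inr (Metric.mem_cthickening_of_dist_le _ (η w) _ _ ⟨w, ⟨hwx, hw.2⟩, rfl⟩ hpw)
  obtain ⟨p, hpS, hp1, hp2⟩ := isPreconnected_closed_iff.1 hS _ _ Metric.isClosed_cthickening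
    Metric.isClosed_cthickening hcover
    ⟨η u, hu, Metric.self_subset_cthickening _ ⟨u, ⟨le_rfl, hx.1⟩, rfl⟩⟩
    ⟨η v, hv, Metric.self_subset_cthickening _ ⟨v, ⟨hx.2, le_rfl⟩, rfl⟩⟩
  obtain ⟨w₁, hw₁, hd₁⟩ := exists_near hl hp1
  obtain ⟨w₂, hw₂, hd₂⟩ := exists_near hr hp2
  have hw : dist (η w₁) (η w₂) ≤ 2 * R := by
    linarith [dist_triangle_left (η w₁) (η w₂) p]
  have hlen := h.abs_sub_le hQ (hl hw₁) (hr hw₂) hw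
  rw [abs_of_nonneg (by linarith [hw₁.2, hw₂.1])] at hlen
  have hup := (h.2 x hx w₁ (hl hw₁)).2
  have habs : |w₁ - x| ≤ Q * (2 * R + Q) := by
    rw [abs_sub_comm, abs_of_nonneg (by linarith [hw₁.2])]
    linarith [hw₂.1]
  have hmul := mul_le_mul_of_nonneg_left habs (by linarith : (0 : ℝ) ≤ Q)
  exact ⟨p, hpS, by linarith [dist_triangle_right (η x) p (η w₁)]⟩

/-- In a locally Morse path, the endpoints of the competing quasi-geodesic may come in either
order. -/
lemma LocMorseOn.image_subset {M : ℝ → ℝ} {L : ℝ} {I : Set ℝ} {γ : ℝ → X}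
    (h : LocMorseOn M L I γ) {q : ℝ} (hq : 1 ≤ q) {u v : ℝ} (hu : u ∈ I) (hv : v ∈ I)
    (huv : |v - u| ≤ L) {lam : ℝ → X} {a b : ℝ} (hab : a ≤ b)
    (hlam : QGeoOn q (Set.Icc a b) lam) (ha : lam a = γ u) (hb : lam b = γ v) :
    lam '' Set.Icc a b ⊆ Metric.cthickening (M q) (γ '' Set.uIcc u v) := by
  rcases le_total u v with hle | hle
  · rw [abs_of_nonneg (sub_nonneg.2 hle)] at huv
    rw [Set.uIcc_of_le hle]
    exact h u hu v hv hle huv q hq u ⟨le_rfl, hle⟩ v ⟨hle, le_rfl⟩ hle lam a b hab hlam ha hb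
  · rw [abs_sub_comm, abs_of_nonneg (sub_nonneg.2 hle)] at huv
    rw [Set.uIcc_of_ge hle]
    have := h v hv u hu hle huv q hq v ⟨le_rfl, hle⟩ u ⟨hle, le_rfl⟩ hle _ (-b) (-a)
      (by linarith) hlam.comp_neg (by simpa using hb) (by simpa using ha)
    rintro _ ⟨t, ht, rfl⟩
    exact this ⟨-t, ⟨by linarith [ht.2], by linarith [ht.1]⟩, by simp⟩

lemma exists_dist_le_of_mem_cthickening {Q : ℝ} (hQ : 0 ≤ Q) {I : Set ℝ} {γ : ℝ → X} {x : X}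
    (hx : x ∈ Metric.cthickening Q (γ '' I)) : ∃ u ∈ I, dist x (γ u) ≤ Q + 1 := by
  have := Metric.cthickening_subset_thickening' (by linarith) (lt_add_one Q) _ hx
  obtain ⟨_, ⟨u, hu, rfl⟩, hd⟩ := Metric.mem_thickening_iff.1 this
  exact ⟨u, hu, hd.le⟩

end Lemmas

end MorseLTG

theorem stmt8 {X : Type*} [MetricSpace X] (hX : MorseLTG.GeodesicSpace X)
    (M : ℝ → ℝ) (hM : MorseLTG.IsMorseGauge M) (Q : ℝ) (hQ : 1 ≤ Q) :
    ∃ M' : ℝ → ℝ, MorseLTG.IsMorseGauge M' ∧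
      ∀ L' : ℝ, 0 ≤ L' → ∃ L : ℝ, 0 ≤ L ∧
        ∀ (I I' : Set ℝ), I.OrdConnected → I'.OrdConnected →
          ∀ γ γ' : ℝ → X,
            MorseLTG.QGeoOn Q I γ → MorseLTG.LocMorseOn M L I γ →
            MorseLTG.QGeoOn Q I' γ' → γ' '' I' ⊆ Metric.cthickening Q (γ '' I) →
            MorseLTG.LocMorseOn M' L' I' γ' := by
  obtain ⟨hmono, hcont, hnonneg⟩ := hM
  have hQ0 : 0 ≤ Q := by linarith
  set C := Q + 1 with hC
  have hC0 : 0 ≤ C := by linarith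
  set R := M (Q + 4 * C) with hRdef
  have hR : 0 ≤ R := hnonneg _ (by linarith)
  set K := Q * (Q * (2 * R + Q)) + Q + R with hK
  have hK0 : 0 ≤ K := by positivity
  have hshift : ∀ t : ℝ, 1 ≤ t → 1 ≤ t + 4 * C := fun t ht => by linarith
  refine ⟨fun t => M (t + 4 * C) + (K + C), ⟨?_, ?_, ?_⟩, fun L' hL' =>
    ⟨Q * (Q * L' + Q + 2 * C + Q), by positivity, ?_⟩⟩
  · intro s hs t ht hst
    have := hmono (hshift s hs) (hshift t ht) (by linarith)
    dsimp only
    linarith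
  · exact (hcont.comp (continuous_id.add continuous_const).continuousOn hshift).add
      continuousOn_const
  · intro t ht
    have := hnonneg _ (hshift t ht)
    positivity
  intro I I' hI hI' γ γ' hγ hloc hγ' hsub s₀ hs₀ t₀ ht₀ _ hL q hq s hs t ht hst lam a b hab
    hlam ha hb
  have hs' : s ∈ I' := hI'.out hs₀ ht₀ hs
  have ht' : t ∈ I' := hI'.out hs₀ ht₀ ht
  obtain ⟨u, hu, hsu⟩ := MorseLTG.exists_dist_le_of_mem_cthickening hQ0 (hsub ⟨s, hs', rfl⟩)
  obtain ⟨v, hv, htv⟩ := MorseLTG.exists_dist_le_of_mem_cthickening hQ0 (hsub ⟨t, ht', rfl⟩)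
  have huv : |v - u| ≤ Q * (Q * L' + Q + 2 * C + Q) := by
    refine hγ.abs_sub_le hQ hu hv ?_
    have h1 := (hγ'.2 s hs' t ht').2
    rw [abs_of_nonneg (sub_nonneg.2 hst)] at h1
    have h2 : Q * (t - s) ≤ Q * L' :=
      mul_le_mul_of_nonneg_left (by linarith [hs.1, ht.2]) hQ0
    have h3 := dist_triangle4 (γ u) (γ' s) (γ' t) (γ v)
    rw [dist_comm (γ u) (γ' s)] at h3
    linarith
  have huvI : Set.uIcc u v ⊆ I := hI.uIcc_subset hu hv
  have hγuv := hγ.mono huvI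
  -- the given path, prolonged to the endpoints of `γ[u, v]`, passes close to all of `γ[u, v]`
  obtain ⟨σ, c, d, hcs, htd, hσ, -, hσc, hσd, hσclose⟩ :=
    (hγ'.mono (hI'.out hs' ht')).exists_extend hX hQ hst hsu htv
  have hcd : c ≤ d := hcs.trans (hst.trans htd)
  have hσsub := hloc.image_subset (hshift Q hQ) hu hv huv hcd hσ hσc hσd
  have hnear : ∀ x ∈ Set.uIcc u v, ∃ w ∈ Set.Icc s t, dist (γ x) (γ' w) ≤ K + C := by
    intro x hx
    obtain ⟨_, ⟨r, hr, rfl⟩, hp⟩ := hγuv.exists_dist_le_of_isPreconnected hQ hR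
      (isPreconnected_Icc.image σ hσ.1) ⟨c, ⟨le_rfl, hcd⟩, hσc⟩ ⟨d, ⟨hcd, le_rfl⟩, hσd⟩ hσsub hx
    obtain ⟨w, hw, hrw⟩ := hσclose r hr
    exact ⟨w, hw, by linarith [dist_triangle (γ x) (σ r) (γ' w)]⟩
  rw [← ha] at hsu
  rw [← hb] at htv
  obtain ⟨mu, a', b', ha', hb', hmu, heq, hmua, hmub, -⟩ := hlam.exists_extend hX hq hab hsu htv
  -- the competitor, prolonged in the same way, stays close to `γ[u, v]`
  have hmusub := hloc.image_subset (hshift q hq) hu hv huv (ha'.trans (hab.trans hb')) hmu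
    hmua hmub
  rintro _ ⟨r, hr, rfl⟩
  have hmem := hmusub ⟨r, ⟨ha'.trans hr.1, hr.2.trans hb'⟩, heq hr⟩
  rw [(isCompact_uIcc.image_of_continuousOn hγuv.1).cthickening_eq_biUnion_closedBall
    (hnonneg _ (hshift q hq))] at hmem
  obtain ⟨x, hx, hrx⟩ : ∃ x ∈ Set.uIcc u v, dist (lam r) (γ x) ≤ M (q + 4 * C) := by
    simpa only [Set.mem_iUnion, Set.exists_mem_image, Metric.mem_closedBall, exists_prop]
      using hmem
  obtain ⟨w, hw, hxw⟩ := hnear x hx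
  refine Metric.mem_cthickening_of_dist_le _ (γ' w) _ _ ⟨w, hw, rfl⟩ ?_
  linarith [dist_triangle (lam r) (γ x) (γ' w)]
end

section
/- A geodesic in a metric space $X$ is an isometric embedding $\gamma\colon I\to X$ of a closed (bounded or unbounded) interval $I\subseteq\mathbb{R}$; its image is also denoted $\gamma$. For points $p=\gamma(s)$ and $q=\gamma(t)$ on $\gamma$, $[p,q]_\gamma$ denotes the image under $\gamma$ of the closed interval between $s$ and $t$. A closest-point projection of $x\in X$ onto $\gamma$ is a point $x'\in\gamma$ with $d(x,x')=d(x,\gamma)$; let $\pi_\gamma(x)$ be the set of these points. For $C\ge 0$, a geodesic $\gamma$ is $C$-contracting if for every $x\in X$ the set $\bigcup\{\pi_\gamma(z) : z\in X,\ d(x,z)<d(x,\gamma)\}$ has diameter at most $C$. Let $C\ge 0$ be a constant. There exists a constant $C'$, depending only on $C$, such that the following holds in every proper geodesic metric space $X$. Let $\gamma$ be a $C$-contracting geodesic in $X$, let $x,y\in X$, and let $x'$ and $y'$ be closest-point projections of $x$ and $y$, respectively, onto $\gamma$ with $d(x',y')\ge C'$. Then for every geodesic $\eta$ from $x$ to $y$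 there exist points $u,v$ on $\eta$ such that the Hausdorff distance between $[u,v]_\eta$ and $[x',y']_\gamma$ is at most $C'$ and, moreover, every point $w$ on $\eta$ which lies in the closed $C$-neighbourhood of $[x',y']_\gamma$ belongs to $[u,v]_\eta$. -/
/-- `γ` restricted to `I` is an isometric embedding of `I ⊆ ℝ`. -/
def GeodesicOn {X : Type*} [MetricSpace X] (I : Set ℝ) (γ : ℝ → X) : Prop :=
  ∀ s ∈ I, ∀ t ∈ I, dist (γ s) (γ t) = |t - s|

/-- `X` is a geodesic metric space: any two points are joined by a geodesic. -/
def GeodesicSpace (X : Type*) [MetricSpace X] : Prop :=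
  ∀ x y : X, ∃ γ : ℝ → X, γ 0 = x ∧ γ (dist x y) = y ∧
    GeodesicOn (Set.Icc 0 (dist x y)) γ

/-- The set of closest-point projections of `x` to `A`. -/
def projSet {X : Type*} [MetricSpace X] (A : Set X) (x : X) : Set X :=
  {y ∈ A | ∀ z ∈ A, dist x y ≤ dist x z}

/-- `A` is `C`-contracting: for every `x`, the projection to `A` of the open ball of radius
`d(x, A)` around `x` has (extended) diameter at most `C`. -/
def ContractingSet {X : Type*} [MetricSpace X] (C : ℝ) (A : Set X) : Prop :=
  ∀ x : X, Metric.ediam (⋃ y ∈ Metric.ball x (Metric.infDist x A), projSet A y) ≤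
    ENNReal.ofReal C

/-- `γ`, with domain `I`, is a `C`-contracting geodesic: `I` is a closed interval (bounded or
not), `γ` is an isometric embedding on `I`, and its image is `C`-contracting. -/
structure IsContractingGeodesic {X : Type*} [MetricSpace X] (C : ℝ) (I : Set ℝ) (γ : ℝ → X) :
    Prop where
  ordConnected : I.OrdConnected
  isClosed : IsClosed I
  geodesic : GeodesicOn I γ
  contracting : ContractingSet C (γ '' I)

open Metric Set

section Projections

variable {X : Type*} [MetricSpace X]

lemma infDist_eq_dist_of_mem_projSet {A : Set X} {x p : X} (hp : p ∈ projSet A x) :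
    infDist x A = dist x p :=
  le_antisymm (infDist_le_dist_of_mem hp.1) ((le_infDist ⟨p, hp.1⟩).2 fun _ hz => hp.2 _ hz)

lemma IsContractingGeodesic.isClosed_image {C : ℝ} {I : Set ℝ} {γ : ℝ → X}
    (h : IsContractingGeodesic C I γ) : IsClosed (γ '' I) := by
  have hiso : Isometry (fun r : I => γ r) := Isometry.of_dist_eq fun r r' => by
    rw [h.geodesic r r.2 r' r'.2, Subtype.dist_eq, Real.dist_eq, abs_sub_comm]
  have : CompleteSpace I := h.isClosed.completeSpace_coe
  have := hiso.isClosedEmbedding.isClosed_range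
  rwa [image_eq_range]

lemma exists_mem_projSet [ProperSpace X] {A : Set X} (hA : IsClosed A) (hne : A.Nonempty) (x : X) :
    ∃ p, p ∈ projSet A x := by
  obtain ⟨p, hp, h⟩ := hA.exists_infDist_eq_dist hne x
  exact ⟨p, hp, fun z hz => h ▸ infDist_le_dist_of_mem hz⟩

lemma ContractingSet.dist_le {C : ℝ} {A : Set X} (hC : 0 ≤ C) (h : ContractingSet C A)
    {x z p q : X} (hxz : dist x z < infDist x A) (hp : p ∈ projSet A x) (hq : q ∈ projSet A z) :
    dist p q ≤ C := by
  have hp' : p ∈ ⋃ y ∈ ball x (infDist x A), projSet A y :=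
    mem_biUnion (mem_ball_self (dist_nonneg.trans_lt hxz)) hp
  have hq' : q ∈ ⋃ y ∈ ball x (infDist x A), projSet A y :=
    mem_biUnion (mem_ball'.2 hxz) hq
  have := (edist_le_ediam_of_mem hp' hq').trans (h x)
  rwa [edist_dist, ENNReal.ofReal_le_ofReal_iff hC] at this

lemma dist_le_add_infDist {A : Set X} {x y p q : X} (hp : p ∈ projSet A x)
    (hq : q ∈ projSet A y) : dist x y ≤ infDist x A + infDist y A + dist p q := by
  rw [infDist_eq_dist_of_mem_projSet hp, infDist_eq_dist_of_mem_projSet hq]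
  linarith [dist_triangle4 x p q y, dist_comm q y]

end Projections

section Geodesics

variable {X : Type*} [MetricSpace X]

lemma GeodesicOn.mono {I J : Set ℝ} {η : ℝ → X} (h : GeodesicOn J η) (hIJ : I ⊆ J) :
    GeodesicOn I η :=
  fun r hr r' hr' => h r (hIJ hr) r' (hIJ hr')

lemma GeodesicOn.dist_of_le {I : Set ℝ} {η : ℝ → X} (h : GeodesicOn I η) {r r' : ℝ}
    (hr : r ∈ I) (hr' : r' ∈ I) (hle : r ≤ r') : dist (η r) (η r') = r' - r := by
  rw [h r hr r' hr', abs_of_nonneg (sub_nonneg.2 hle)]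

lemma GeodesicOn.continuousOn {I : Set ℝ} {η : ℝ → X} (h : GeodesicOn I η) :
    ContinuousOn η I := by
  refine LipschitzOnWith.continuousOn (K := 1) (LipschitzOnWith.of_dist_le_mul fun r hr r' hr' => ?_)
  rw [h r hr r' hr', Real.dist_eq, abs_sub_comm, NNReal.coe_one, one_mul]

/-- Along a geodesic that stays at distance at least `R` from `A`, the projection moves by at
most `C` for every `R` units of length. -/
lemma ContractingSet.dist_le_nat_mul [ProperSpace X] {C R : ℝ} {A : Set X} (hC : 0 ≤ C)
    (hA : IsClosed A) (hc : ContractingSet C A) {η : ℝ → X} {q : ℝ} {q' : X}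
    (hq' : q' ∈ projSet A (η q)) (n : ℕ) :
    ∀ (p : ℝ) (p' : X), p ≤ q → GeodesicOn (Icc p q) η →
      (∀ r ∈ Icc p q, R ≤ infDist (η r) A) → p' ∈ projSet A (η p) →
      q - p < (n + 1) * R → dist p' q' ≤ (n + 1) * C := by
  induction n with
  | zero =>
    intro p p' hpq hη hout hp' hlt
    have := hc.dist_le hC (x := η p) (z := η q) (p := p') (q := q') ?_ hp' hq'
    · simpa using this
    · rw [hη.dist_of_le (left_mem_Icc.2 hpq) (right_mem_Icc.2 hpq) hpq]
      have := hout p (left_mem_Icc.2 hpq)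
      norm_num at hlt
      linarith
  | succ n ih =>
    intro p p' hpq hη hout hp' hlt
    push_cast at hlt ⊢
    have hn : (0 : ℝ) < n + 2 := by positivity
    set r := p + (q - p) / (n + 2) with hr
    have hmul : (q - p) / (n + 2) * (n + 2) = q - p := div_mul_cancel₀ _ hn.ne'
    have hnonneg : 0 ≤ (q - p) / (n + 2) := div_nonneg (sub_nonneg.2 hpq) hn.le
    have hstep : (q - p) / (n + 2) < R := by
      rw [div_lt_iff₀ hn]; linarith
    have hpr : p ≤ r := by linarith
    have hrq : r ≤ q := by nlinarith [mul_nonneg hnonneg (Nat.cast_nonneg (α := ℝ) n)]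
    have hsub : Icc r q ⊆ Icc p q := Icc_subset_Icc_left hpr
    obtain ⟨r', hr'⟩ := exists_mem_projSet hA ⟨q', hq'.1⟩ (η r)
    have h₁ : dist p' r' ≤ C := by
      refine hc.dist_le hC ?_ hp' hr'
      rw [hη.dist_of_le (left_mem_Icc.2 hpq) ⟨hpr, hrq⟩ hpr]
      have := hout p (left_mem_Icc.2 hpq)
      linarith
    have h₂ : dist r' q' ≤ (n + 1) * C := by
      refine ih r r' hrq (hη.mono hsub) (fun w hw => hout w (hsub hw)) hr' ?_
      have : q - r = (q - p) / (n + 2) * (n + 1) := by rw [hr]; linarith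
      rw [this, mul_comm]
      exact mul_lt_mul_of_pos_left hstep (by positivity)
    linarith [dist_triangle p' r' q']

lemma ContractingSet.dist_le_length [ProperSpace X] {C R : ℝ} {A : Set X} (hC : 0 ≤ C)
    (hR : 0 < R) (hA : IsClosed A) (hc : ContractingSet C A) {η : ℝ → X} {p q : ℝ} {p' q' : X}
    (hpq : p ≤ q) (hη : GeodesicOn (Icc p q) η) (hout : ∀ r ∈ Icc p q, R ≤ infDist (η r) A)
    (hp' : p' ∈ projSet A (η p)) (hq' : q' ∈ projSet A (η q)) :
    dist p' q' ≤ ((q - p) / R + 1) * C := by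
  have hnn : 0 ≤ (q - p) / R := div_nonneg (sub_nonneg.2 hpq) hR.le
  have h := hc.dist_le_nat_mul hC hA hq' ⌊(q - p) / R⌋₊ p p' hpq hη hout hp'
    ((div_lt_iff₀ hR).1 (Nat.lt_floor_add_one _))
  refine h.trans (mul_le_mul_of_nonneg_right ?_ hC)
  linarith [Nat.floor_le hnn]

/-- The projections of the endpoints of a geodesic that stays far from a contracting set are
uniformly close. -/
lemma ContractingSet.dist_le_of_far [ProperSpace X] {C R : ℝ} {A : Set X} (hC : 0 ≤ C)
    (hR : 0 < R) (hCR : 2 * C ≤ R) (hA : IsClosed A) (hc : ContractingSet C A) {η : ℝ → X}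
    {p q : ℝ} {p' q' : X} (hpq : p ≤ q) (hη : GeodesicOn (Icc p q) η)
    (hout : ∀ r ∈ Icc p q, R ≤ infDist (η r) A)
    (hp' : p' ∈ projSet A (η p)) (hq' : q' ∈ projSet A (η q)) :
    dist p' q' ≤ 6 * C + R := by
  have hp := left_mem_Icc.2 hpq
  have hq := right_mem_Icc.2 hpq
  have hD₁ := hout p hp
  have hD₂ := hout q hq
  have hlen := dist_le_add_infDist hp' hq'
  rw [hη.dist_of_le hp hq hpq] at hlen
  set D₁ := infDist (η p) A
  set D₂ := infDist (η q) A
  have near_left : ∀ r ∈ Icc p q, ∀ r' ∈ projSet A (η r), r - p < D₁ → dist p' r' ≤ C := by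
    intro r hr r' hr' hlt
    exact hc.dist_le hC (by rwa [hη.dist_of_le hp hr hr.1]) hp' hr'
  have near_right : ∀ r ∈ Icc p q, ∀ r' ∈ projSet A (η r), q - r < D₂ → dist r' q' ≤ C := by
    intro r hr r' hr' hlt
    rw [dist_comm]
    exact hc.dist_le hC (by rwa [dist_comm, hη.dist_of_le hr hq hr.2]) hq' hr'
  rcases le_or_gt (p + D₁ - R / 2) (q - D₂ + R / 2) with hle | hgt
  · set r₁ := p + D₁ - R / 2 with hr₁
    set r₂ := q - D₂ + R / 2 with hr₂
    have hm₁ : r₁ ∈ Icc p q := ⟨by linarith, by linarith⟩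
    have hm₂ : r₂ ∈ Icc p q := ⟨by linarith, by linarith⟩
    obtain ⟨z₁, hz₁⟩ := exists_mem_projSet hA ⟨q', hq'.1⟩ (η r₁)
    obtain ⟨z₂, hz₂⟩ := exists_mem_projSet hA ⟨q', hq'.1⟩ (η r₂)
    have hsub : Icc r₁ r₂ ⊆ Icc p q := Icc_subset_Icc hm₁.1 hm₂.2
    have h₁ := near_left r₁ hm₁ z₁ hz₁ (by linarith)
    have h₂ := near_right r₂ hm₂ z₂ hz₂ (by linarith)
    have h₃ := hc.dist_le_length hC hR hA hle (hη.mono hsub) (fun r hr => hout r (hsub hr)) hz₁ hz₂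
    have h₄ : (r₂ - r₁) / R * C ≤ (r₂ - r₁) / 2 := by
      rw [div_mul_eq_mul_div, div_le_iff₀ hR]
      nlinarith [mul_nonneg (sub_nonneg.2 hle) (sub_nonneg.2 hCR)]
    have h₅ := dist_triangle4 p' z₁ z₂ q'
    linarith
  · rcases le_or_gt (q - D₂) (p - R / 2) with hlt | hlt
    · linarith [near_right p hp p' hp' (by linarith)]
    · rcases lt_or_ge (q - p) D₁ with h | h
      · linarith [near_left q hq q' hq' h]
      · have hm : p + D₁ - R / 2 ∈ Icc p q := ⟨by linarith, by linarith⟩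
        obtain ⟨z, hz⟩ := exists_mem_projSet hA ⟨q', hq'.1⟩ (η (p + D₁ - R / 2))
        have h₁ := near_left _ hm z hz (by linarith)
        have h₂ := near_right _ hm z hz (by linarith)
        linarith [dist_triangle p' z q']

/-- Following a geodesic backwards to its nearest entry time in a closed neighbourhood. -/
lemma GeodesicOn.exists_last_entry {R : ℝ} {A : Set X} {η : ℝ → X} {p w : ℝ} (hpw : p ≤ w)
    (hη : GeodesicOn (Icc p w) η) (hp : infDist (η p) A ≤ R) (hw : R ≤ infDist (η w) A) :
    ∃ e ∈ Icc p w, infDist (η e) A = R ∧ ∀ r ∈ Icc e w, R ≤ infDist (η r) A := by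
  have hcont : ContinuousOn (fun r => infDist (η r) A) (Icc p w) :=
    (continuous_infDist_pt A).comp_continuousOn hη.continuousOn
  have hcpt : IsCompact (Icc p w ∩ (fun r => infDist (η r) A) ⁻¹' {R}) :=
    isCompact_Icc.of_isClosed_subset
      (hcont.preimage_isClosed_of_isClosed isClosed_Icc isClosed_singleton) inter_subset_left
  have hne : (Icc p w ∩ (fun r => infDist (η r) A) ⁻¹' {R}).Nonempty := by
    obtain ⟨r, hr, h⟩ := intermediate_value_Icc hpw hcont ⟨hp, hw⟩
    exact ⟨r, hr, h⟩
  obtain ⟨e, ⟨he, heR⟩, hmax⟩ := hcpt.exists_isGreatest hne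
  refine ⟨e, he, heR, fun r hr => ?_⟩
  by_contra! hlt
  have hsub : Icc r w ⊆ Icc p w := Icc_subset_Icc_left (he.1.trans hr.1)
  obtain ⟨r', hr', h⟩ := intermediate_value_Icc hr.2 (hcont.mono hsub) ⟨hlt.le, hw⟩
  have hle : r' ≤ e := hmax ⟨hsub hr', h⟩
  have : r = e := le_antisymm (hr'.1.trans hle) hr.1
  rw [this] at hlt
  exact hlt.ne heR

/-- Following a geodesic forwards to its nearest entry time in a closed neighbourhood. -/
lemma GeodesicOn.exists_first_entry {R : ℝ} {A : Set X} {η : ℝ → X} {w q : ℝ} (hwq : w ≤ q)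
    (hη : GeodesicOn (Icc w q) η) (hw : R ≤ infDist (η w) A) (hq : infDist (η q) A ≤ R) :
    ∃ e ∈ Icc w q, infDist (η e) A = R ∧ ∀ r ∈ Icc w e, R ≤ infDist (η r) A := by
  have hη' : GeodesicOn (Icc (-q) (-w)) (fun r => η (-r)) := by
    intro r hr r' hr'
    rw [hη (-r) ⟨by linarith [hr.2], by linarith [hr.1]⟩ (-r')
      ⟨by linarith [hr'.2], by linarith [hr'.1]⟩, abs_sub_comm]
    congr 1; ring
  obtain ⟨e, he, h, hout⟩ := hη'.exists_last_entry (A := A) (R := R) (neg_le_neg hwq)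
    (by simpa using hq) (by simpa using hw)
  refine ⟨-e, ⟨by linarith [he.2], by linarith [he.1]⟩, h, fun r hr => ?_⟩
  simpa using hout (-r) ⟨by linarith [hr.2], by linarith [hr.1]⟩

/-- A geodesic with endpoints near a contracting set stays near it. -/
lemma ContractingSet.infDist_le_of_endpoints [ProperSpace X] {C R : ℝ} {A : Set X} (hC : 0 ≤ C)
    (hR : 0 < R) (hCR : 2 * C ≤ R) (hA : IsClosed A) (hne : A.Nonempty)
    (hc : ContractingSet C A) {η : ℝ → X} {p q : ℝ} (hη : GeodesicOn (Icc p q) η)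
    (hp : infDist (η p) A ≤ R) (hq : infDist (η q) A ≤ R) {w : ℝ} (hw : w ∈ Icc p q) :
    infDist (η w) A ≤ 4 * R + 6 * C := by
  rcases le_or_gt (infDist (η w) A) R with h | h
  · linarith
  obtain ⟨e₁, he₁, hd₁, hout₁⟩ :=
    (hη.mono (Icc_subset_Icc_right hw.2)).exists_last_entry hw.1 hp h.le
  obtain ⟨e₂, he₂, hd₂, hout₂⟩ :=
    (hη.mono (Icc_subset_Icc_left hw.1)).exists_first_entry hw.2 h.le hq
  have hm₁ : e₁ ∈ Icc p q := ⟨he₁.1, he₁.2.trans hw.2⟩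
  have hm₂ : e₂ ∈ Icc p q := ⟨hw.1.trans he₂.1, he₂.2⟩
  have hle : e₁ ≤ e₂ := he₁.2.trans he₂.1
  obtain ⟨z₁, hz₁⟩ := exists_mem_projSet hA hne (η e₁)
  obtain ⟨z₂, hz₂⟩ := exists_mem_projSet hA hne (η e₂)
  have hfar := hc.dist_le_of_far hC hR hCR hA hle (hη.mono (Icc_subset_Icc hm₁.1 hm₂.2))
    (fun r hr => (le_total r w).elim (fun hrw => hout₁ r ⟨hr.1, hrw⟩)
      fun hrw => hout₂ r ⟨hrw, hr.2⟩) hz₁ hz₂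
  have hlen := dist_le_add_infDist hz₁ hz₂
  rw [hη.dist_of_le hm₁ hm₂ hle, hd₁, hd₂] at hlen
  have hdist := hη.dist_of_le hm₁ hw he₁.2
  have := infDist_le_infDist_add_dist (s := A) (x := η w) (y := η e₁)
  rw [dist_comm, hdist, hd₁] at this
  linarith [he₂.1]

lemma exists_mem_uIcc_abs_sub_le {r s t K : ℝ} (hK : 0 ≤ K)
    (h : |r - s| + |r - t| ≤ |s - t| + 2 * K) : ∃ r' ∈ uIcc s t, |r - r'| ≤ K := by
  wlog hst : s ≤ t generalizing s t
  · rw [uIcc_comm]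
    exact this (by rw [abs_sub_comm t s]; linarith) (le_of_not_ge hst)
  rw [uIcc_of_le hst]
  rw [abs_of_nonpos (sub_nonpos.2 hst)] at h
  rcases lt_or_ge r s with h₁ | h₁
  · refine ⟨s, left_mem_Icc.2 hst, ?_⟩
    rw [abs_of_neg (by linarith), abs_of_neg (by linarith)] at h
    rw [abs_of_neg (by linarith)]
    linarith
  rcases lt_or_ge t r with h₂ | h₂
  · refine ⟨t, right_mem_Icc.2 hst, ?_⟩
    rw [abs_of_nonneg (by linarith), abs_of_pos (by linarith)] at h
    rw [abs_of_pos (by linarith)]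
    linarith
  · exact ⟨r, ⟨h₁, h₂⟩, by simpa using hK⟩

lemma abs_sub_le_of_mem_uIcc {r r' s t K : ℝ} (hr : r ∈ uIcc s t) (hr' : r' ∈ uIcc s t)
    (h : |(|r - s| - |r' - s|)| ≤ K) : |r - r'| ≤ K := by
  rcases le_total s t with hst | hst
  · rw [uIcc_of_le hst] at hr hr'
    rw [abs_of_nonneg (sub_nonneg.2 hr.1), abs_of_nonneg (sub_nonneg.2 hr'.1)] at h
    convert h using 2; ring
  · rw [uIcc_of_ge hst] at hr hr'
    rw [abs_of_nonpos (sub_nonpos.2 hr.2), abs_of_nonpos (sub_nonpos.2 hr'.2), abs_sub_comm] at h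
    convert h using 2; ring

/-- A geodesic contained in a neighbourhood of another geodesic, with endpoints close to two of
its points, fellow travels the segment between them. -/
lemma GeodesicOn.hausdorffDist_le {I : Set ℝ} {γ η : ℝ → X} {p q s t M N : ℝ}
    (hI : I.OrdConnected) (hγ : GeodesicOn I γ) (hpq : p ≤ q) (hη : GeodesicOn (Icc p q) η)
    (hs : s ∈ I) (ht : t ∈ I) (hM : 0 ≤ M) (hp : dist (η p) (γ s) ≤ N)
    (hq : dist (η q) (γ t) ≤ N) (hnear : ∀ w ∈ Icc p q, ∃ r ∈ I, dist (η w) (γ r) ≤ M) :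
    hausdorffDist (η '' Icc p q) (γ '' uIcc s t) ≤ 4 * M + 5 * N := by
  have hN : 0 ≤ N := dist_nonneg.trans hp
  have hmp := left_mem_Icc.2 hpq
  have hmq := right_mem_Icc.2 hpq
  have hsub : uIcc s t ⊆ I := hI.uIcc_subset hs ht
  have hlen := hη.dist_of_le hmp hmq hpq
  have hst : dist (γ s) (γ t) = |s - t| := by rw [hγ s hs t ht, abs_sub_comm]
  have hclose : ∀ w ∈ Icc p q, ∃ r ∈ uIcc s t, dist (η w) (γ r) ≤ 2 * M + 2 * N := by
    intro w hw
    obtain ⟨r, hr, hd⟩ := hnear w hw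
    have h₁ : |r - s| ≤ N + (w - p) + M := by
      rw [← hγ s hs r hr, ← hη.dist_of_le hmp hw hw.1]
      linarith [dist_triangle4 (γ s) (η p) (η w) (γ r), dist_comm (γ s) (η p)]
    have h₂ : |r - t| ≤ N + (q - w) + M := by
      rw [← hγ t ht r hr, ← hη.dist_of_le hw hmq hw.2]
      linarith [dist_triangle4 (γ t) (η q) (η w) (γ r), dist_comm (γ t) (η q),
        dist_comm (η q) (η w)]
    have h₃ : q - p ≤ |s - t| + 2 * N := by
      rw [← hlen, ← hst]
      linarith [dist_triangle4 (η p) (γ s) (γ t) (η q), dist_comm (γ t) (η q)]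
    obtain ⟨r', hr', hK⟩ := exists_mem_uIcc_abs_sub_le (r := r) (s := s) (t := t)
      (K := M + 2 * N) (by linarith) (by linarith)
    refine ⟨r', hr', ?_⟩
    have := hγ r hr r' (hsub hr')
    rw [abs_sub_comm] at this
    linarith [dist_triangle (η w) (γ r) (γ r')]
  refine hausdorffDist_le_of_mem_dist (by linarith) ?_ ?_
  · rintro _ ⟨w, hw, rfl⟩
    obtain ⟨r, hr, hd⟩ := hclose w hw
    exact ⟨γ r, mem_image_of_mem γ hr, by linarith⟩
  · rintro _ ⟨r, hr, rfl⟩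
    rcases le_or_gt |r - s| (q - p) with h | h
    · have hw : p + |r - s| ∈ Icc p q := ⟨by linarith [abs_nonneg (r - s)], by linarith⟩
      obtain ⟨r', hr', hd⟩ := hclose _ hw
      refine ⟨_, mem_image_of_mem η hw, ?_⟩
      have h₁ : |r - r'| ≤ 2 * M + 3 * N := by
        refine abs_sub_le_of_mem_uIcc hr hr' ?_
        have hw' := hη.dist_of_le hmp hw hw.1
        rw [add_sub_cancel_left] at hw'
        rw [← hw', ← hγ s hs r' (hsub hr'), abs_le]
        constructor
        · linarith [dist_triangle4 (γ s) (η p) (η (p + |r - s|)) (γ r'), dist_comm (γ s) (η p)]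
        · linarith [dist_triangle4 (η p) (γ s) (γ r') (η (p + |r - s|)),
            dist_comm (γ r') (η (p + |r - s|))]
      have h₂ := hγ r' (hsub hr') r (hsub hr)
      linarith [dist_triangle (η (p + |r - s|)) (γ r') (γ r), dist_comm (γ r) (η (p + |r - s|))]
    · refine ⟨η q, mem_image_of_mem η hmq, ?_⟩
      have h₁ : |s - t| ≤ q - p + 2 * N := by
        rw [← hlen, ← hst]
        linarith [dist_triangle4 (γ s) (η p) (η q) (γ t), dist_comm (γ s) (η p)]
      have h₂ : |r - t| ≤ 2 * N := by
        refine abs_sub_le_of_mem_uIcc hr right_mem_uIcc ?_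
        have : |r - s| ≤ |t - s| := abs_sub_left_of_mem_uIcc hr
        rw [abs_sub_comm s t] at h₁
        rw [abs_le]
        constructor <;> linarith
      have h₃ := hγ t ht r (hsub hr)
      linarith [dist_triangle (η q) (γ t) (γ r), dist_comm (γ r) (η q)]

end Geodesics

theorem stmt9 (C : ℝ) (hC : 0 ≤ C) :
    ∃ C' : ℝ, ∀ (X : Type*) [MetricSpace X] [ProperSpace X], GeodesicSpace X →
      ∀ (I : Set ℝ) (γ : ℝ → X), IsContractingGeodesic C I γ →
      ∀ (x y : X) (s t : ℝ), s ∈ I → t ∈ I →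
        γ s ∈ projSet (γ '' I) x → γ t ∈ projSet (γ '' I) y →
        C' ≤ dist (γ s) (γ t) →
        ∀ (a b : ℝ) (η : ℝ → X), a ≤ b → GeodesicOn (Set.Icc a b) η → η a = x → η b = y →
          ∃ u v : ℝ, u ∈ Set.Icc a b ∧ v ∈ Set.Icc a b ∧ u ≤ v ∧
            Metric.hausdorffDist (η '' Set.Icc u v) (γ '' Set.uIcc s t) ≤ C' ∧
            ∀ w ∈ Set.Icc a b, η w ∈ Metric.cthickening C (γ '' Set.uIcc s t) →
              w ∈ Set.Icc u v := by
  obtain ⟨R, hR⟩ : ∃ R, R = 2 * C + 1 := ⟨_, rfl⟩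
  refine ⟨4 * (4 * R + 6 * C) + 5 * (3 * R + 6 * C), ?_⟩
  intro X _ _ _ I γ hγ x y s t hs ht hxs hyt hC' a b η hab hη hηa hηb
  subst hηa hηb
  have hR0 : 0 < R := by linarith
  have hCR : 2 * C ≤ R := by linarith
  have hA := hγ.isClosed_image
  have hne : (γ '' I).Nonempty := ⟨γ s, mem_image_of_mem γ hs⟩
  have hc := hγ.contracting
  set A := γ '' I
  have hcont : ContinuousOn (fun r => infDist (η r) A) (Icc a b) :=
    (continuous_infDist_pt A).comp_continuousOn hη.continuousOn
  set E := Icc a b ∩ (fun r => infDist (η r) A) ⁻¹' Iic R with hE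
  have hcpt : IsCompact E := isCompact_Icc.of_isClosed_subset
    (hcont.preimage_isClosed_of_isClosed isClosed_Icc isClosed_Iic) inter_subset_left
  have hEne : E.Nonempty := by
    by_contra hemp
    have hout : ∀ r ∈ Icc a b, R ≤ infDist (η r) A := fun r hr =>
      le_of_not_ge fun h => hemp ⟨r, hr, h⟩
    linarith [hc.dist_le_of_far hC hR0 hCR hA hab hη hout hxs hyt]
  obtain ⟨p, ⟨hpm, hpR⟩, hpmin⟩ := hcpt.exists_isLeast hEne
  obtain ⟨q, ⟨hqm, hqR⟩, hqmax⟩ := hcpt.exists_isGreatest hEne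
  have hpq : p ≤ q := hpmin ⟨hqm, hqR⟩
  have hpR' : infDist (η p) A ≤ R := hpR
  have hqR' : infDist (η q) A ≤ R := hqR
  have hp : dist (η p) (γ s) ≤ 3 * R + 6 * C := by
    rcases le_total (infDist (η a) A) R with h | h
    · have : p = a := le_antisymm (hpmin ⟨left_mem_Icc.2 hab, h⟩) hpm.1
      rw [this, ← infDist_eq_dist_of_mem_projSet hxs]
      linarith
    · obtain ⟨e, he, heR, hout⟩ :=
        (hη.mono (Icc_subset_Icc_right hpm.2)).exists_first_entry hpm.1 h hpR'
      have : e = p := le_antisymm he.2 (hpmin ⟨⟨he.1, he.2.trans hpm.2⟩, heR.le⟩)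
      subst this
      obtain ⟨z, hz⟩ := exists_mem_projSet hA hne (η e)
      have h₁ := hc.dist_le_of_far hC hR0 hCR hA hpm.1
        (hη.mono (Icc_subset_Icc_right hpm.2)) hout hxs hz
      have h₂ := infDist_eq_dist_of_mem_projSet hz
      linarith [dist_triangle (η e) z (γ s), dist_comm z (γ s)]
  have hq : dist (η q) (γ t) ≤ 3 * R + 6 * C := by
    rcases le_total (infDist (η b) A) R with h | h
    · have : q = b := le_antisymm hqm.2 (hqmax ⟨right_mem_Icc.2 hab, h⟩)
      rw [this, ← infDist_eq_dist_of_mem_projSet hyt]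
      linarith
    · obtain ⟨e, he, heR, hout⟩ :=
        (hη.mono (Icc_subset_Icc_left hqm.1)).exists_last_entry hqm.2 hqR' h
      have : e = q := le_antisymm (hqmax ⟨⟨hqm.1.trans he.1, he.2⟩, heR.le⟩) he.1
      subst this
      obtain ⟨z, hz⟩ := exists_mem_projSet hA hne (η e)
      have h₁ := hc.dist_le_of_far hC hR0 hCR hA hqm.2
        (hη.mono (Icc_subset_Icc_left hqm.1)) hout hz hyt
      have h₂ := infDist_eq_dist_of_mem_projSet hz
      linarith [dist_triangle (η e) z (γ t)]
  have hη' : GeodesicOn (Icc p q) η := hη.mono (Icc_subset_Icc hpm.1 hqm.2)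
  refine ⟨p, q, hpm, hqm, hpq, ?_, ?_⟩
  · refine GeodesicOn.hausdorffDist_le hγ.ordConnected hγ.geodesic hpq hη' hs ht (by linarith)
      hp hq fun w hw => ?_
    obtain ⟨_, hz⟩ := exists_mem_projSet hA hne (η w)
    obtain ⟨r, hr, rfl⟩ := hz.1
    refine ⟨r, hr, ?_⟩
    rw [← infDist_eq_dist_of_mem_projSet hz]
    exact hc.infDist_le_of_endpoints hC hR0 hCR hA hne hη' hpR' hqR' hw
  · intro w hw hmem
    have hsub : γ '' uIcc s t ⊆ A := image_mono (hγ.ordConnected.uIcc_subset hs ht)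
    have hwA : η w ∈ cthickening C A := cthickening_subset_of_subset C hsub hmem
    have hwR : infDist (η w) A ≤ R := by
      have := ENNReal.toReal_mono ENNReal.ofReal_ne_top (mem_cthickening_iff.1 hwA)
      rw [ENNReal.toReal_ofReal hC] at this
      exact le_trans this (by linarith)
    exact ⟨hpmin ⟨hw, hwR⟩, hqmax ⟨hw, hwR⟩⟩
end
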